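/- Let C be a commutative Noetherian ring with Krull dimension D < ∞ and let A = C[x_1,…,x_n]. Then for every r ≥ max(3, D+2) and every column b ∈ IUm_{2r+1}(A), the first standard basis column e_1 belongs to EO(2r+1,A)^{≤N} · b, where N = n(12r−8) + (nD + r(r−1)/2)·(r(r−1)/2 + ⌈(r−1)/2⌉ + 9r−2) + 9r−8. -/

import Mathlib

open Matrix

section OddDefs

variable {R : Type*} [CommRing R]

/-- Position of the middle basis vector `e_0` in the basis
`e_1,…,e_r,e_0,e_{-r},…,e_{-1}` of `R^{2r+1}`. -/
def midO (r : ℕ) : Fin (2 * r + 1) := ⟨r, by omega⟩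

/-- Position of `e_{-i}` given the position of `e_i` (odd case); fixes the middle position. -/
def negO (r : ℕ) (i : Fin (2 * r + 1)) : Fin (2 * r + 1) := ⟨2 * r - i.val, by omega⟩

/-- The split quadratic form `q(x) = x_0^2 + ∑_{i=1}^r x_i x_{-i}` on `R^{2r+1}`. -/
def quadO (r : ℕ) (x : Fin (2 * r + 1) → R) : R :=
  x (midO r) * x (midO r) + ∑ i : Fin r, x ⟨i.val, by omega⟩ * x ⟨2 * r - i.val, by omega⟩

/-- The odd split orthogonal group `O(2r+1,R)`, as a set of matrices. -/
def OO (r : ℕ) (R : Type*) [CommRing R] : Set (Matrix (Fin (2 * r + 1)) (Fin (2 * r + 1)) R) :=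
  {g | IsUnit g ∧ ∀ x : Fin (2 * r + 1) → R, quadO r (g.mulVec x) = quadO r x}

/-- Long root elementary transvection `T_{i,j}(ξ) = e + ξ e_{i,j} - ξ e_{-j,-i}` (odd case). -/
def TOlong (r : ℕ) (i j : Fin (2 * r + 1)) (ξ : R) :
    Matrix (Fin (2 * r + 1)) (Fin (2 * r + 1)) R :=
  1 + ξ • Matrix.single i j 1 - ξ • Matrix.single (negO r j) (negO r i) 1

/-- Short root elementary transvection
`T_{i,0}(ξ) = e + 2ξ e_{i,0} - ξ e_{0,-i} - ξ² e_{i,-i}`. -/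
def TOshort (r : ℕ) (i : Fin (2 * r + 1)) (ξ : R) :
    Matrix (Fin (2 * r + 1)) (Fin (2 * r + 1)) R :=
  1 + (2 * ξ) • Matrix.single i (midO r) 1
    - ξ • Matrix.single (midO r) (negO r i) 1
    - (ξ * ξ) • Matrix.single i (negO r i) 1

/-- Being an elementary orthogonal transvection (odd case). -/
def IsElemO (r : ℕ) (g : Matrix (Fin (2 * r + 1)) (Fin (2 * r + 1)) R) : Prop :=
  (∃ i j : Fin (2 * r + 1), ∃ ξ : R, i ≠ midO r ∧ j ≠ midO r ∧ i ≠ j ∧ i ≠ negO r j ∧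
      g = TOlong r i j ξ) ∨
  (∃ i : Fin (2 * r + 1), ∃ ξ : R, i ≠ midO r ∧ g = TOshort r i ξ)

/-- `EO(2r+1,R)^{≤N}` : products of at most `N` elementary orthogonal transvections. -/
def EOO (r N : ℕ) (R : Type*) [CommRing R] :
    Set (Matrix (Fin (2 * r + 1)) (Fin (2 * r + 1)) R) :=
  {g | ∃ L : List (Matrix (Fin (2 * r + 1)) (Fin (2 * r + 1)) R),
    L.length ≤ N ∧ (∀ m ∈ L, IsElemO r m) ∧ g = L.prod}

/-- `IUm_{2r+1}(R)` : columns `b` with `q(b) = 0` such that the row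
`(b_1,…,b_r,2b_0,b_{-r},…,b_{-1})` is unimodular. -/
def IUmO (r : ℕ) (R : Type*) [CommRing R] : Set (Fin (2 * r + 1) → R) :=
  {b | Ideal.span (Set.range fun i => if i = midO r then 2 * b i else b i) = ⊤ ∧ quadO r b = 0}

end OddDefs

section Part1
open Matrix

/-- Split model of `R^{2r+1}`. -/
@[ext]
structure Tri (ι R : Type*) where
  p : ι → R
  c : R
  m : ι → R

namespace Tri

variable {ι : Type*} [DecidableEq ι] {R S : Type*} [CommRing R] [CommRing S]

def map (f : R →+* S) (b : Tri ι R) : Tri ι S := ⟨fun i => f (b.p i), f b.c, fun i => f (b.m i)⟩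

@[simp] lemma map_p (f : R →+* S) (b : Tri ι R) (i : ι) : (b.map f).p i = f (b.p i) := rfl
@[simp] lemma map_c (f : R →+* S) (b : Tri ι R) : (b.map f).c = f b.c := rfl
@[simp] lemma map_m (f : R →+* S) (b : Tri ι R) (i : ι) : (b.map f).m i = f (b.m i) := rfl

def levi (b : Tri ι R) (i j : ι) (ξ : R) : Tri ι R :=
  ⟨Function.update b.p i (b.p i + ξ * b.p j), b.c, Function.update b.m j (b.m j - ξ * b.m i)⟩
def up (b : Tri ι R) (i j : ι) (ξ : R) : Tri ι R :=
  ⟨Function.update (Function.update b.p i (b.p i + ξ * b.m j)) j (b.p j - ξ * b.m i), b.c, b.m⟩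
def down (b : Tri ι R) (i j : ι) (ξ : R) : Tri ι R :=
  ⟨b.p, b.c, Function.update (Function.update b.m i (b.m i + ξ * b.p j)) j (b.m j - ξ * b.p i)⟩
def sdown (b : Tri ι R) (i : ι) (ξ : R) : Tri ι R :=
  ⟨b.p, b.c - ξ * b.p i, Function.update b.m i (b.m i + 2 * ξ * b.c - ξ ^ 2 * b.p i)⟩

/-- One elementary step with coefficient in `I`. -/
inductive Step (I : Ideal R) : Tri ι R → Tri ι R → Prop
  | levi (b : Tri ι R) (i j : ι) (h : i ≠ j) (ξ : R) (hξ : ξ ∈ I) : Step I b (b.levi i j ξ)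
  | up (b : Tri ι R) (i j : ι) (h : i ≠ j) (ξ : R) (hξ : ξ ∈ I) : Step I b (b.up i j ξ)
  | down (b : Tri ι R) (i j : ι) (h : i ≠ j) (ξ : R) (hξ : ξ ∈ I) : Step I b (b.down i j ξ)
  | sdown (b : Tri ι R) (i : ι) (ξ : R) (hξ : ξ ∈ I) : Step I b (b.sdown i ξ)

/-- At most `N` steps with coefficients in `I`. -/
inductive Reach (I : Ideal R) : ℕ → Tri ι R → Tri ι R → Prop
  | refl (N : ℕ) (b : Tri ι R) : Reach I N b b
  | head {N : ℕ} {b b' b'' : Tri ι R} (h : Step I b b') (h' : Reach I N b' b'') :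
      Reach I (N + 1) b b''

lemma Reach.mono {I : Ideal R} {N : ℕ} {b b' : Tri ι R} (h : Reach I N b b') :
    ∀ {M : ℕ}, N ≤ M → Reach I M b b' := by
  induction h with
  | refl N b => intro M _; exact .refl _ _
  | head h h' ih =>
    intro M hM
    obtain ⟨M, rfl⟩ : ∃ k, M = k + 1 := ⟨M - 1, by omega⟩
    exact .head h (ih (by omega))

lemma Reach.trans {I : Ideal R} {N M : ℕ} {b b' b'' : Tri ι R} (h : Reach I N b b')
    (h' : Reach I M b' b'') : Reach I (N + M) b b'' := by
  induction h with
  | refl N b => exact h'.mono (by omega)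
  | head h _ ih => rw [add_right_comm]; exact .head h (ih h')

lemma Reach.trans' {I : Ideal R} {N M K : ℕ} {b b' b'' : Tri ι R} (h : Reach I N b b')
    (h' : Reach I M b' b'') (hK : N + M ≤ K) : Reach I K b b'' := (h.trans h').mono hK

lemma Step.reach {I : Ideal R} {b b' : Tri ι R} (h : Step I b b') : Reach I 1 b b' :=
  .head h (.refl 0 _)

lemma Step.ideal_mono {I J : Ideal R} (hIJ : I ≤ J) {b b' : Tri ι R} (h : Step I b b') :
    Step J b b' := by
  cases h with
  | levi i j h ξ hξ => exact .levi _ i j h ξ (hIJ hξ)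
  | up i j h ξ hξ => exact .up _ i j h ξ (hIJ hξ)
  | down i j h ξ hξ => exact .down _ i j h ξ (hIJ hξ)
  | sdown i ξ hξ => exact .sdown _ i ξ (hIJ hξ)

lemma Reach.ideal_mono {I J : Ideal R} (hIJ : I ≤ J) {N : ℕ} {b b' : Tri ι R}
    (h : Reach I N b b') : Reach J N b b' := by
  induction h with
  | refl N b => exact .refl _ _
  | head h _ ih => exact .head (h.ideal_mono hIJ) ih

lemma Step.map (f : R →+* S) {I : Ideal R} {b b' : Tri ι R} (h : Step I b b') :
    Step (I.map f) (b.map f) (b'.map f) := by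
  cases h with
  | levi i j h ξ hξ =>
    convert Step.levi (b.map f) i j h (f ξ) (Ideal.mem_map_of_mem f hξ) using 1
    ext k <;> simp [Tri.levi, Function.update_apply, apply_ite f]
  | up i j h ξ hξ =>
    convert Step.up (b.map f) i j h (f ξ) (Ideal.mem_map_of_mem f hξ) using 1
    ext k <;> simp [Tri.up, Function.update_apply, apply_ite f]
  | down i j h ξ hξ =>
    convert Step.down (b.map f) i j h (f ξ) (Ideal.mem_map_of_mem f hξ) using 1
    ext k <;> simp [Tri.down, Function.update_apply, apply_ite f]
  | sdown i ξ hξ =>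
    convert Step.sdown (b.map f) i (f ξ) (Ideal.mem_map_of_mem f hξ) using 1
    ext k <;> simp [Tri.sdown, Function.update_apply, apply_ite f, map_ofNat f 2]

lemma Reach.map (f : R →+* S) {I : Ideal R} {N : ℕ} {b b' : Tri ι R} (h : Reach I N b b') :
    Reach (I.map f) N (b.map f) (b'.map f) := by
  induction h with
  | refl N b => exact .refl _ _
  | head h _ ih => exact .head (h.map f) ih

lemma Reach.map_top (f : R →+* S) {I : Ideal R} {N : ℕ} {b b' : Tri ι R} (h : Reach I N b b') :
    Reach ⊤ N (b.map f) (b'.map f) := (h.map f).ideal_mono le_top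

/-- coordinates change within `I`. -/
def Cong (I : Ideal R) (b b' : Tri ι R) : Prop :=
  (∀ i, b'.p i - b.p i ∈ I) ∧ b'.c - b.c ∈ I ∧ ∀ i, b'.m i - b.m i ∈ I

lemma Step.cong {I : Ideal R} {b b' : Tri ι R} (h : Step I b b') : Cong I b b' := by
  cases h with
  | levi i j h ξ hξ =>
    refine ⟨fun k => ?_, by simp [Tri.levi], fun k => ?_⟩
    · by_cases hk : k = i
      · subst hk; simpa [Tri.levi] using I.mul_mem_right _ hξ
      · simp [Tri.levi, hk]
    · by_cases hk : k = j
      · subst hk; simpa [Tri.levi] using I.mul_mem_right _ hξ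
      · simp [Tri.levi, hk]
  | up i j h ξ hξ =>
    refine ⟨fun k => ?_, by simp [Tri.up], fun k => by simp [Tri.up]⟩
    by_cases hk : k = j
    · subst hk; simpa [Tri.up] using I.mul_mem_right _ hξ
    · by_cases hk' : k = i
      · subst hk'; simpa [Tri.up, hk] using I.mul_mem_right _ hξ
      · simp [Tri.up, hk, hk']
  | down i j h ξ hξ =>
    refine ⟨fun k => by simp [Tri.down], by simp [Tri.down], fun k => ?_⟩
    by_cases hk : k = j
    · subst hk; simpa [Tri.down] using I.mul_mem_right _ hξ
    · by_cases hk' : k = i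
      · subst hk'; simpa [Tri.down, hk] using I.mul_mem_right _ hξ
      · simp [Tri.down, hk, hk']
  | sdown i ξ hξ =>
    refine ⟨fun k => by simp [Tri.sdown], ?_, fun k => ?_⟩
    · simpa [Tri.sdown] using I.mul_mem_right _ hξ
    · by_cases hk : k = i
      · subst hk
        have : b.m k + 2 * ξ * b.c - ξ ^ 2 * b.p k - b.m k = ξ * (2 * b.c - ξ * b.p k) := by ring
        simp only [Tri.sdown, Function.update_self, this]
        exact I.mul_mem_right _ hξ
      · simp [Tri.sdown, hk]

lemma Cong.refl (I : Ideal R) (b : Tri ι R) : Cong I b b := ⟨by simp, by simp, by simp⟩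
lemma Cong.trans {I : Ideal R} {b b' b'' : Tri ι R} (h : Cong I b b') (h' : Cong I b' b'') :
    Cong I b b'' :=
  ⟨fun i => by simpa using I.add_mem (h'.1 i) (h.1 i), by simpa using I.add_mem h'.2.1 h.2.1,
    fun i => by simpa using I.add_mem (h'.2.2 i) (h.2.2 i)⟩

lemma Reach.cong {I : Ideal R} {N : ℕ} {b b' : Tri ι R} (h : Reach I N b b') : Cong I b b' := by
  induction h with
  | refl N b => exact .refl _ _
  | head h _ ih => exact h.cong.trans ih

section q
variable [Fintype ι]
def q (b : Tri ι R) : R := b.c ^ 2 + ∑ i, b.p i * b.m i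

lemma sum_two {f g : ι → R} (i j : ι) (h : i ≠ j) (hfg : ∀ k, k ≠ i → k ≠ j → f k = g k)
    (h2 : f i + f j = g i + g j) : ∑ k, f k = ∑ k, g k := by
  have key : ∀ f : ι → R, ∑ k, f k = f i + f j + ∑ k ∈ (Finset.univ.erase i).erase j, f k := by
    intro f
    rw [add_assoc, Finset.add_sum_erase _ _ (by simp [h.symm]), Finset.add_sum_erase _ _ (by simp)]
  rw [key f, key g, h2]
  congr 1
  exact Finset.sum_congr rfl fun k hk => by
    simp only [Finset.mem_erase] at hk; exact hfg k hk.2.1 hk.1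

lemma Step.q_eq {I : Ideal R} {b b' : Tri ι R} (h : Step I b b') : b'.q = b.q := by
  cases h with
  | levi i j h ξ hξ =>
    simp only [q, Tri.levi]; congr 1
    refine sum_two i j h (fun k hi hj => by simp [hi, hj]) ?_
    simp [h, h.symm]; ring
  | up i j h ξ hξ =>
    simp only [q, Tri.up]; congr 1
    refine sum_two i j h (fun k hi hj => by simp [hi, hj]) ?_
    simp [h]; ring
  | down i j h ξ hξ =>
    simp only [q, Tri.down]; congr 1
    refine sum_two i j h (fun k hi hj => by simp [hi, hj]) ?_
    simp [h]; ring
  | sdown i ξ hξ =>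
    simp only [q, Tri.sdown]
    rw [← Finset.add_sum_erase _ _ (Finset.mem_univ i),
      ← Finset.add_sum_erase _ (fun i => b.p i * b.m i) (Finset.mem_univ i)]
    have : ∑ k ∈ Finset.univ.erase i, b.p k * Function.update b.m i
        (b.m i + 2 * ξ * b.c - ξ ^ 2 * b.p i) k = ∑ k ∈ Finset.univ.erase i, b.p k * b.m k :=
      Finset.sum_congr rfl fun k hk => by simp [(Finset.mem_erase.1 hk).1]
    rw [this]; simp; ring

lemma Reach.q_eq {I : Ideal R} {N : ℕ} {b b' : Tri ι R} (h : Reach I N b b') : b'.q = b.q := by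
  induction h with
  | refl N b => rfl
  | head h _ ih => rw [ih, h.q_eq]

lemma map_q (f : R →+* S) (b : Tri ι R) : (b.map f).q = f b.q := by simp [q]

end q

/-- All `p,m` coordinates lie in `P`. -/
def Bad (P : Ideal R) (b : Tri ι R) : Prop := (∀ i, b.p i ∈ P) ∧ ∀ i, b.m i ∈ P

/-- unimodularity -/
def Uni (b : Tri ι R) : Prop := ∀ P : Ideal R, P.IsPrime → ¬ Bad P b

lemma c_mem_of_bad [Fintype ι] {P : Ideal R} [hP : P.IsPrime] {b : Tri ι R} (hq : b.q = 0)
    (h : Bad P b) : b.c ∈ P := by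
  have : b.c ^ 2 ∈ P := by
    have h1 : b.c ^ 2 = b.q - ∑ i, b.p i * b.m i := by simp [q]
    rw [h1, hq]
    exact P.sub_mem P.zero_mem (P.sum_mem fun i _ => P.mul_mem_right _ (h.1 i))
  exact hP.mem_of_pow_mem _ this

lemma Step.bad {I : Ideal R} {P : Ideal R} {b b' : Tri ι R} (h : Step I b b')
    (hc : b'.c ∈ P) (hb : Bad P b') : Bad P b := by
  cases h with
  | levi i j h ξ hξ =>
    have hj := hb.1 j
    have hi := hb.1 i
    have mi := hb.2 i
    have mj := hb.2 j
    simp only [Tri.levi, ne_eq, h.symm, not_false_eq_true, Function.update_of_ne,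
      Function.update_self, h] at hj hi mi mj
    constructor
    · intro k
      by_cases hk : k = i
      · subst hk; simpa using P.sub_mem hi (P.mul_mem_left ξ hj)
      · simpa [Tri.levi, hk] using hb.1 k
    · intro k
      by_cases hk : k = j
      · subst hk; simpa using P.add_mem mj (P.mul_mem_left ξ mi)
      · simpa [Tri.levi, hk] using hb.2 k
  | up i j h ξ hξ =>
    have hm : ∀ k, b.m k ∈ P := fun k => hb.2 k
    refine ⟨fun k => ?_, hm⟩
    have hp := hb.1 k
    by_cases hk : k = j
    · subst hk; simp only [Tri.up, Function.update_self] at hp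
      simpa using P.add_mem hp (P.mul_mem_left ξ (hm i))
    · by_cases hk' : k = i
      · subst hk'; simp [Tri.up, hk] at hp
        simpa using P.sub_mem hp (P.mul_mem_left ξ (hm j))
      · simpa [Tri.up, hk, hk'] using hp
  | down i j h ξ hξ =>
    have hm : ∀ k, b.p k ∈ P := fun k => hb.1 k
    refine ⟨hm, fun k => ?_⟩
    have hp := hb.2 k
    by_cases hk : k = j
    · subst hk; simp only [Tri.down, Function.update_self] at hp
      simpa using P.add_mem hp (P.mul_mem_left ξ (hm i))
    · by_cases hk' : k = i
      · subst hk'; simp [Tri.down, hk] at hp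
        simpa using P.sub_mem hp (P.mul_mem_left ξ (hm j))
      · simpa [Tri.down, hk, hk'] using hp
  | sdown i ξ hξ =>
    have hm : ∀ k, b.p k ∈ P := fun k => hb.1 k
    have hc' : b.c ∈ P := by
      simpa [Tri.sdown] using P.add_mem hc (P.mul_mem_left ξ (hm i))
    refine ⟨hm, fun k => ?_⟩
    have hp := hb.2 k
    by_cases hk : k = i
    · subst hk; simp only [Tri.sdown, Function.update_self] at hp
      have := P.add_mem (P.sub_mem hp (P.mul_mem_left (2 * ξ) hc')) (P.mul_mem_left (ξ ^ 2) (hm k))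
      convert this using 1; ring
    · simpa [Tri.sdown, hk] using hp

/-- isotropic unimodular -/
def Iso [Fintype ι] (b : Tri ι R) : Prop := b.q = 0 ∧ b.Uni

lemma Step.iso [Fintype ι] {I : Ideal R} {b b' : Tri ι R} (h : Step I b b') (hb : b.Iso) :
    b'.Iso := by
  have hq : b'.q = 0 := by rw [h.q_eq, hb.1]
  exact ⟨hq, fun P hP hbad => hb.2 P hP (h.bad (c_mem_of_bad hq hbad) hbad)⟩

lemma Reach.iso [Fintype ι] {I : Ideal R} {N : ℕ} {b b' : Tri ι R} (h : Reach I N b b')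
    (hb : b.Iso) : b'.Iso := by
  induction h with
  | refl N b => exact hb
  | head h _ ih => exact ih (h.iso hb)

lemma Iso.map [Fintype ι] (f : R →+* S) {b : Tri ι R} (hb : b.Iso) : (b.map f).Iso := by
  refine ⟨by rw [map_q, hb.1, map_zero], fun P hP h => hb.2 (P.comap f) inferInstance ?_⟩
  exact ⟨fun i => h.1 i, fun i => h.2 i⟩

/-- iteration over a finset -/
lemma Reach.iter {I : Ideal R} {α : Type*} [DecidableEq α] (k : ℕ) (T : Finset α)
    (Inv : Finset α → Tri ι R → Prop)
    (step : ∀ U i b, i ∈ T → i ∉ U → U ⊆ T → Inv U b → ∃ b', Reach I k b b' ∧ Inv (insert i U) b')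
    (b : Tri ι R) (hb : Inv ∅ b) : ∃ b', Reach I (k * T.card) b b' ∧ Inv T b' := by
  suffices ∀ U, U ⊆ T → ∃ b', Reach I (k * U.card) b b' ∧ Inv U b' from this T subset_rfl
  intro U
  induction U using Finset.induction_on with
  | empty => intro _; exact ⟨b, .refl _ _, hb⟩
  | insert i U hi ih =>
    intro hU
    obtain ⟨b1, h1, hI⟩ := ih (fun x hx => hU (Finset.mem_insert_of_mem hx))
    obtain ⟨b2, h2, hI2⟩ := step U i b1 (hU (Finset.mem_insert_self _ _)) hi
      (fun x hx => hU (Finset.mem_insert_of_mem hx)) hI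
    refine ⟨b2, h1.trans' h2 ?_, hI2⟩
    rw [Finset.card_insert_of_notMem hi]; exact le_of_eq (by ring)

end Tri
end Part1

section Part2
open Matrix

namespace Tri
variable {R : Type*} [CommRing R] {r : ℕ}

def vec (b : Tri (Fin r) R) : Fin (2 * r + 1) → R := fun i =>
  if h : i.val < r then b.p ⟨i.val, h⟩ else if h' : i.val = r then b.c else
    b.m ⟨2 * r - i.val, by omega⟩

def ofVec (v : Fin (2 * r + 1) → R) : Tri (Fin r) R :=
  ⟨fun i => v ⟨i.val, by omega⟩, v (midO r), fun i => v ⟨2 * r - i.val, by omega⟩⟩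

lemma vec_ofVec (v : Fin (2 * r + 1) → R) : (ofVec v).vec = v := by
  funext i
  unfold vec ofVec midO
  split_ifs with h h'
  · rfl
  · simp only; congr 1; ext; simp [h']
  · simp only; congr 1; ext; simp; omega

lemma q_ofVec (v : Fin (2 * r + 1) → R) : (ofVec v).q = quadO r v := by
  simp [q, ofVec, quadO, pow_two]

lemma iso_ofVec {v : Fin (2 * r + 1) → R} (h : v ∈ IUmO r R) : (ofVec v).Iso := by
  have hq : (ofVec v).q = 0 := by rw [q_ofVec]; exact h.2
  refine ⟨hq, fun P hP hbad => hP.ne_top (top_le_iff.1 ?_)⟩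
  rw [← h.1, Ideal.span_le]
  rintro _ ⟨i, rfl⟩
  have hc := c_mem_of_bad hq hbad
  have hv : ∀ i, v i ∈ P := by
    intro i
    rw [← vec_ofVec v]
    unfold vec
    split_ifs
    · exact hbad.1 _
    · exact hc
    · exact hbad.2 _
  simp only
  split_ifs
  · exact P.mul_mem_left _ (hv i)
  · exact hv i

def pi (i : Fin r) : Fin (2 * r + 1) := ⟨i.val, by omega⟩
def ni (i : Fin r) : Fin (2 * r + 1) := ⟨2 * r - i.val, by omega⟩

lemma vec_pi (b : Tri (Fin r) R) (i : Fin r) : b.vec (pi i) = b.p i := by simp [vec, pi]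
lemma vec_ni (b : Tri (Fin r) R) (i : Fin r) : b.vec (ni i) = b.m i := by
  have h1 : ¬ (2 * r - i.val < r) := by omega
  have h2 : ¬ (2 * r - i.val = r) := by omega
  unfold vec ni
  rw [dif_neg h1, dif_neg h2]
  have h3 : 2 * r - (2 * r - i.val) = i.val := by omega
  exact congrArg b.m (Fin.ext h3)
lemma vec_mid (b : Tri (Fin r) R) : b.vec (midO r) = b.c := by simp [vec, midO]

lemma neg_pi (i : Fin r) : negO r (pi i) = ni i := rfl
lemma neg_ni (i : Fin r) : negO r (ni i) = pi i := by ext; simp [negO, ni, pi]; omega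

lemma cases_idx (k : Fin (2 * r + 1)) : (∃ i, k = pi i) ∨ k = midO r ∨ ∃ i : Fin r, k = ni i := by
  rcases lt_trichotomy k.val r with h | h | h
  · exact .inl ⟨⟨k.val, h⟩, rfl⟩
  · exact .inr (.inl (Fin.ext h))
  · exact .inr (.inr ⟨⟨2 * r - k.val, by omega⟩, Fin.ext (by simp [ni]; omega)⟩)

@[simp] lemma pi_inj (i j : Fin r) : pi i = pi j ↔ i = j := by simp [pi, Fin.ext_iff]
@[simp] lemma ni_inj (i j : Fin r) : ni i = ni j ↔ i = j := by simp [ni, Fin.ext_iff]; omega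
@[simp] lemma pi_ne_ni (i j : Fin r) : ¬ pi i = ni j := by simp [pi, ni]; omega
@[simp] lemma ni_ne_pi (i j : Fin r) : ¬ ni i = pi j := by simp [pi, ni]; omega
@[simp] lemma pi_ne_mid (i : Fin r) : ¬ pi i = midO r := by simp [pi, midO]; omega
@[simp] lemma ni_ne_mid (i : Fin r) : ¬ ni i = midO r := by simp [ni, midO]; omega
@[simp] lemma mid_ne_pi (i : Fin r) : ¬ midO r = pi i := by simp [pi, midO]; omega
@[simp] lemma mid_ne_ni (i : Fin r) : ¬ midO r = ni i := by simp [ni, midO]; omega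

lemma long_apply (i j k : Fin (2 * r + 1)) (ξ : R) (v : Fin (2 * r + 1) → R) :
    ((TOlong r i j ξ).mulVec v) k = v k + (if k = i then ξ * v j else 0)
      - (if k = negO r j then ξ * v (negO r i) else 0) := by
  simp [TOlong, Matrix.add_mulVec, Matrix.sub_mulVec, Matrix.smul_mulVec, Matrix.single_mulVec,
    Function.update_apply]

lemma short_apply (i k : Fin (2 * r + 1)) (ξ : R) (v : Fin (2 * r + 1) → R) :
    ((TOshort r i ξ).mulVec v) k = v k + (if k = i then 2 * ξ * v (midO r) else 0)
      - (if k = midO r then ξ * v (negO r i) else 0)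
      - (if k = i then ξ * ξ * v (negO r i) else 0) := by
  simp [TOshort, Matrix.add_mulVec, Matrix.sub_mulVec, Matrix.smul_mulVec, Matrix.single_mulVec,
    Function.update_apply]

lemma Step.realize {I : Ideal R} {b b' : Tri (Fin r) R} (h : Step I b b') :
    ∃ g, IsElemO r g ∧ g.mulVec b.vec = b'.vec := by
  cases h with
  | levi i j h ξ hξ =>
    refine ⟨TOlong r (pi i) (pi j) ξ, .inl ⟨_, _, ξ, by simp, by simp, by simpa, ?_, rfl⟩, ?_⟩
    · rw [neg_pi]; simp
    funext k
    rw [long_apply, neg_pi, neg_pi]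
    rcases cases_idx k with ⟨k, rfl⟩ | rfl | ⟨k, rfl⟩
    · simp only [vec_pi, pi_inj, pi_ne_ni, Tri.levi, Function.update_apply, if_false, sub_zero]
      split_ifs with hk <;> simp [hk]
    · simp [vec_mid, Tri.levi]
    · simp only [vec_ni, ni_inj, ni_ne_pi, Tri.levi, Function.update_apply, if_false, add_zero]
      split_ifs with hk <;> simp [hk]
  | up i j h ξ hξ =>
    refine ⟨TOlong r (pi i) (ni j) ξ, .inl ⟨_, _, ξ, by simp, by simp, by simp, ?_, rfl⟩, ?_⟩
    · rw [neg_ni]; simpa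
    funext k
    rw [long_apply, neg_ni, neg_pi]
    rcases cases_idx k with ⟨k, rfl⟩ | rfl | ⟨k, rfl⟩
    · simp only [vec_pi, vec_ni, pi_inj, Tri.up, Function.update_apply]
      by_cases hj : k = j
      · subst hj; simp [h.symm]
      · by_cases hi : k = i <;> simp [hi, hj, h]
    · simp [vec_mid, Tri.up]
    · simp [vec_ni, Tri.up]
  | down i j h ξ hξ =>
    refine ⟨TOlong r (ni i) (pi j) ξ, .inl ⟨_, _, ξ, by simp, by simp, by simp, ?_, rfl⟩, ?_⟩
    · rw [neg_pi]; simpa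
    funext k
    rw [long_apply, neg_ni, neg_pi]
    rcases cases_idx k with ⟨k, rfl⟩ | rfl | ⟨k, rfl⟩
    · simp [vec_pi, Tri.down]
    · simp [vec_mid, Tri.down]
    · simp only [vec_pi, vec_ni, ni_inj, Tri.down, Function.update_apply]
      by_cases hj : k = j
      · subst hj; simp [h.symm]
      · by_cases hi : k = i <;> simp [hi, hj, h]
  | sdown i ξ hξ =>
    refine ⟨TOshort r (ni i) ξ, .inr ⟨_, ξ, by simp, rfl⟩, ?_⟩
    funext k
    rw [short_apply, neg_ni]
    rcases cases_idx k with ⟨k, rfl⟩ | rfl | ⟨k, rfl⟩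
    · simp [vec_pi, Tri.sdown]
    · simp [vec_mid, vec_pi, Tri.sdown]
    · simp only [vec_pi, vec_ni, vec_mid, ni_inj, ni_ne_mid, Tri.sdown, Function.update_apply]
      by_cases hi : k = i
      · subst hi; simp; ring
      · simp [hi]

lemma Reach.realize {I : Ideal R} {N : ℕ} {b b' : Tri (Fin r) R} (h : Reach I N b b') :
    ∃ E ∈ EOO r N R, E.mulVec b.vec = b'.vec := by
  induction h with
  | refl N b => exact ⟨1, ⟨[], by simp, by simp, by simp⟩, by simp⟩
  | head h _ ih =>
    obtain ⟨g, hg, hgb⟩ := h.realize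
    obtain ⟨E, ⟨L, hL, hL', rfl⟩, hE⟩ := ih
    refine ⟨L.prod * g, ⟨L ++ [g], by simpa using hL, ?_, by simp⟩, ?_⟩
    · intro m hm
      rcases List.mem_append.1 hm with hm | hm
      · exact hL' m hm
      · rw [List.mem_singleton.1 hm]; exact hg
    · rw [← Matrix.mulVec_mulVec, hgb, hE]

end Tri
end Part2

section Part3
section Avoid
variable {R : Type*} [CommRing R]

lemma avoid (n : ℕ) : ∀ (s : Finset (Ideal R)) (hn : s.card = n) (hp : ∀ Q ∈ s, Q.IsPrime)
    (y z : Ideal R → R) (h : ∀ Q ∈ s, y Q ∉ Q ∨ z Q ∉ Q), ∃ ξ, ∀ Q ∈ s, y Q + ξ * z Q ∉ Q := by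
  classical
  induction n with
  | zero =>
    intro s hn hp y z h
    rw [Finset.card_eq_zero] at hn; subst hn
    exact ⟨0, by simp⟩
  | succ n ih =>
    intro s hn hp y z h
    have hne : s.Nonempty := by rw [← Finset.card_pos]; omega
    obtain ⟨Q0, hQ0, hmin⟩ := s.exists_minimal hne
    obtain ⟨ξ, hξ⟩ := ih (s.erase Q0) (by rw [Finset.card_erase_of_mem hQ0]; omega)
      (fun Q hQ => hp Q (Finset.mem_of_mem_erase hQ)) y z
      (fun Q hQ => h Q (Finset.mem_of_mem_erase hQ))
    by_cases hbad : y Q0 + ξ * z Q0 ∈ Q0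
    · have hz : z Q0 ∉ Q0 := by
        intro hz
        rcases h Q0 hQ0 with h | h
        · exact h (by simpa using Q0.sub_mem hbad (Q0.mul_mem_left ξ hz))
        · exact h hz
      have hprime := hp Q0 hQ0
      have hnle : ¬ (s.erase Q0).inf id ≤ Q0 := by
        intro hle
        obtain ⟨Q', hQ', hle'⟩ := (hprime.inf_le' (s := s.erase Q0) (f := id)).1 hle
        have h1 := hmin (Finset.mem_of_mem_erase hQ') hle'
        exact (Finset.mem_erase.1 hQ').1 (le_antisymm hle' h1)
      obtain ⟨η, hη, hη0⟩ := SetLike.not_le_iff_exists.1 hnle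
      refine ⟨ξ + η, fun Q hQ hmem => ?_⟩
      by_cases hQQ : Q = Q0
      · subst hQQ
        have : η * z Q ∈ Q := by
          have := Q.sub_mem hmem hbad
          convert this using 1; ring
        exact (hprime.mem_or_mem this).elim hη0 hz
      · have hQ' := Finset.mem_erase.2 ⟨hQQ, hQ⟩
        have hηQ : η ∈ Q := (Finset.inf_le (f := id) hQ') hη
        apply hξ Q hQ'
        have := Q.sub_mem hmem (Q.mul_mem_right (z Q) hηQ)
        convert this using 1; ring
    · refine ⟨ξ, fun Q hQ => ?_⟩
      by_cases hQQ : Q = Q0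
      · rwa [hQQ]
      · exact hξ Q (Finset.mem_erase.2 ⟨hQQ, hQ⟩)

lemma avoid_set (s : Set (Ideal R)) (hs : s.Finite) (hp : ∀ Q ∈ s, Q.IsPrime)
    (y z : Ideal R → R) (h : ∀ Q ∈ s, y Q ∉ Q ∨ z Q ∉ Q) : ∃ ξ, ∀ Q ∈ s, y Q + ξ * z Q ∉ Q := by
  obtain ⟨ξ, h⟩ := avoid _ hs.toFinset rfl (fun Q hQ => hp Q (by simpa using hQ)) y z
    (fun Q hQ => h Q (by simpa using hQ))
  exact ⟨ξ, fun Q hQ => h Q (by simpa using hQ)⟩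

/-- relative height at least `h` over `K`. -/
def RH (K : Ideal R) : ℕ → Ideal R → Prop
  | 0, P => P.IsPrime ∧ K ≤ P
  | h + 1, P => P.IsPrime ∧ ∃ Q, RH K h Q ∧ Q < P

lemma RH.prime {K : Ideal R} {h : ℕ} {P : Ideal R} (hP : RH K h P) : P.IsPrime := by
  cases h <;> exact hP.1

lemma RH.height {K : Ideal R} : ∀ {h : ℕ} {P : Ideal R} (hP : RH K h P), (h : ℕ∞) ≤ P.height := by
  intro h
  induction h with
  | zero => intro P _; simp
  | succ h ih =>
    rintro P ⟨hP, Q, hQ, hlt⟩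
    have := hQ.prime
    have h1 := Ideal.height_add_one_le_of_lt_of_isPrime hlt
    push_cast
    exact le_trans (add_le_add_left (ih hQ) 1) h1

lemma RH.le {K : Ideal R} : ∀ {h : ℕ} {P : Ideal R} (hP : RH K h P), K ≤ P := by
  intro h
  induction h with
  | zero => intro P h; exact h.2
  | succ h ih => rintro P ⟨hP, Q, hQ, hlt⟩; exact (ih hQ).trans hlt.le

/-- transport along a surjection -/
lemma RH.map_of_surj {S : Type*} [CommRing S] (f : R →+* S) (hf : Function.Surjective f) :
    ∀ {h : ℕ} {P : Ideal R} (hP : RH (RingHom.ker f) h P), RH ⊥ h (P.map f) := by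
  intro h
  induction h with
  | zero => intro P h; haveI := h.1; exact ⟨Ideal.map_isPrime_of_surjective hf h.2, bot_le⟩
  | succ h ih =>
    rintro P ⟨hP, Q, hQ, hlt⟩
    refine ⟨Ideal.map_isPrime_of_surjective hf (hQ.le.trans hlt.le), Q.map f, ih hQ, ?_⟩
    refine lt_of_le_not_ge (Ideal.map_mono hlt.le) fun hle => hlt.not_ge ?_
    have h1 := Ideal.comap_mono (f := f) hle
    rw [Ideal.comap_map_of_surjective' f hf, Ideal.comap_map_of_surjective' f hf,
      sup_eq_left.2 hQ.le, sup_eq_left.2 (hQ.le.trans hlt.le)] at h1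
    exact h1

variable [IsNoetherianRing R]

def MP (F : Set (Ideal R)) (J : Ideal R) : Set (Ideal R) := ⋃ K ∈ F, (K ⊔ J).minimalPrimes

lemma MP_finite {F : Set (Ideal R)} (hF : F.Finite) (J : Ideal R) : (MP F J).Finite :=
  hF.biUnion fun K _ => Ideal.finite_minimalPrimes_of_isNoetherianRing R _

lemma MP_prime {F : Set (Ideal R)} {J : Ideal R} {Q : Ideal R} (h : Q ∈ MP F J) : Q.IsPrime := by
  simp only [MP, Set.mem_iUnion] at h
  obtain ⟨K, _, h⟩ := h
  exact h.1.1

lemma MP_le {F : Set (Ideal R)} {J : Ideal R} {Q : Ideal R} (h : Q ∈ MP F J) : J ≤ Q := by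
  simp only [MP, Set.mem_iUnion] at h
  obtain ⟨K, _, h⟩ := h
  exact le_sup_right.trans h.1.2

lemma MP_exists {F : Set (Ideal R)} {K : Ideal R} (hK : K ∈ F) {J P : Ideal R} (hP : P.IsPrime)
    (h : K ≤ P) (hJ : J ≤ P) : ∃ Q ∈ MP F J, Q ≤ P ∧ K ≤ Q := by
  obtain ⟨Q, hQ, hle⟩ := Ideal.exists_minimalPrimes_le (sup_le h hJ)
  refine ⟨Q, ?_, hle, le_sup_left.trans hQ.1.2⟩
  simp only [MP, Set.mem_iUnion]
  exact ⟨K, hK, hQ⟩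

end Avoid

namespace Tri
variable {ι : Type*} [DecidableEq ι] {R : Type*} [CommRing R] [IsNoetherianRing R]

def GP (F : Set (Ideal R)) (T : Finset ι) (b : Tri ι R) : Prop :=
  ∀ K ∈ F, ∀ P : Ideal R, P.IsPrime → K ≤ P → (∀ i ∈ T, b.p i ∈ P) → (∃ i ∈ T, b.m i ∉ P) →
    RH K (T.card - 1) P

lemma gp_step {F : Set (Ideal R)} (hF : F.Finite) (T : Finset ι) (k : ι) (hk : k ∉ T)
    (b : Tri ι R) (hb : GP F T b) :
    ∃ b', Reach ⊤ T.card b b' ∧ b'.m = b.m ∧ GP F (insert k T) b' := by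
  set J2 : Ideal R := Ideal.span (b.p '' T) ⊔ Ideal.span {b.m k} with hJ2
  have key := Reach.iter (I := (⊤ : Ideal R)) 1 T
    (fun U b' => b'.m = b.m ∧
      (∀ i, i ∉ U → i ≠ k → b'.p i = b.p i) ∧
      (∀ K ∈ F, ∀ P : Ideal R, P.IsPrime → K ≤ P → (∀ i ∈ U, b'.p i ∈ P) → b.m k ∉ P →
        RH K U.card P) ∧
      (∀ Q ∈ MP F J2, (∃ i ∈ U, b.m i ∉ Q) → b'.p k ∉ Q) ∧
      (∀ i ∈ T, b'.p i - b.p i ∈ Ideal.span {b.m k})) ?_ b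
      ⟨rfl, fun _ _ _ => rfl, fun K _ P hP hKP _ _ => ⟨hP, hKP⟩, by simp, by simp⟩
  · obtain ⟨b', hr, hm, -, ha, hb', hc⟩ := key
    refine ⟨b', by simpa using hr, hm, ?_⟩
    intro K hK P hP hKP hp hmP
    rw [Finset.card_insert_of_notMem hk, Nat.add_sub_cancel]
    by_cases hmk : b.m k ∈ P
    · have hT : ∃ i ∈ T, b.m i ∉ P := by
        obtain ⟨i, hi, hi'⟩ := hmP
        rw [hm] at hi'
        rcases Finset.mem_insert.1 hi with rfl | hi
        · exact absurd hmk hi'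
        · exact ⟨i, hi, hi'⟩
      have hmkP : Ideal.span {b.m k} ≤ P := by
        rw [Ideal.span_le]; simpa using hmk
      have hJ : J2 ≤ P := by
        refine sup_le ?_ hmkP
        rw [Ideal.span_le]
        rintro _ ⟨i, hi, rfl⟩
        have := P.sub_mem (hp i (Finset.mem_insert_of_mem hi)) (hmkP (hc i hi))
        simpa using this
      obtain ⟨Q, hQ, hQP, hKQ⟩ := MP_exists hK hP hKP hJ
      obtain ⟨i, hi, hi'⟩ := hT
      have hmi : b.m i ∉ Q := fun h => hi' (hQP h)
      have h1 := hb K hK Q (MP_prime hQ) hKQ (fun i hi => MP_le hQ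
        (le_sup_left (a := Ideal.span (b.p '' T)) (Ideal.subset_span ⟨i, hi, rfl⟩))) ⟨i, hi, hmi⟩
      have h2 := hb' Q hQ ⟨i, hi, hmi⟩
      have hcard : T.card = (T.card - 1) + 1 := by
        have := Finset.card_pos.2 ⟨i, hi⟩; omega
      rw [hcard]
      refine ⟨hP, Q, h1, lt_of_le_of_ne hQP ?_⟩
      rintro rfl
      exact h2 (hp k (Finset.mem_insert_self _ _))
    · exact ha K hK P hP hKP (fun i hi => hp i (Finset.mem_insert_of_mem hi)) hmk
  · rintro U j b1 hjT hjU hUT ⟨hm, hp, ha, hb1, hc⟩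
    have hjk : j ≠ k := fun h => hk (h ▸ hjT)
    set J1 : Ideal R := Ideal.span (b1.p '' U) with hJ1
    obtain ⟨ξ, hξ⟩ := avoid_set
      ({Q ∈ MP F J1 | b.m k ∉ Q} ∪ {Q ∈ MP F J2 | b.m j ∉ Q})
      (((MP_finite hF J1).subset (fun _ h => h.1)).union
        ((MP_finite hF J2).subset (fun _ h => h.1)))
      (by rintro Q (h | h) <;> exact MP_prime h.1)
      (fun Q => open Classical in if b.m k ∈ Q then b1.p k else b1.p j)
      (fun Q => open Classical in if b.m k ∈ Q then -b.m j else b.m k) (by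
        rintro Q (h | h)
        · right; simp only [h.2, if_false]; simpa using h.2
        · have : b.m k ∈ Q := MP_le h.1 (le_sup_right (a := Ideal.span (b.p '' T))
            (Ideal.subset_span rfl))
          right; simpa [this] using h.2)
    have hξ1 : ∀ Q ∈ MP F J1, b.m k ∉ Q → b1.p j + ξ * b.m k ∉ Q := by
      intro Q hQ hmk
      simpa [hmk] using hξ Q (.inl ⟨hQ, hmk⟩)
    have hξ2 : ∀ Q ∈ MP F J2, b.m j ∉ Q → b1.p k - ξ * b.m j ∉ Q := by
      intro Q hQ hmj
      have hmk : b.m k ∈ Q := MP_le hQ (le_sup_right (a := Ideal.span (b.p '' T))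
            (Ideal.subset_span rfl))
      have := hξ Q (.inr ⟨hQ, hmj⟩)
      simpa [hmk, sub_eq_add_neg] using this
    have e1 : (b1.up j k ξ).p k = b1.p k - ξ * b.m j := by simp [Tri.up, hm]
    have e2 : (b1.up j k ξ).p j = b1.p j + ξ * b.m k := by simp [Tri.up, hjk, hm]
    have e3 : ∀ i, i ≠ j → i ≠ k → (b1.up j k ξ).p i = b1.p i := by
      intro i h1 h2; simp [Tri.up, h1, h2]
    refine ⟨b1.up j k ξ, (Step.up b1 j k hjk ξ Submodule.mem_top).reach, hm, ?_, ?_, ?_, ?_⟩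
    · intro i hi hik
      rw [Finset.mem_insert, not_or] at hi
      rw [e3 i hi.1 hik, hp i hi.2 hik]
    · intro K hK P hP hKP hpP hmk
      rw [Finset.card_insert_of_notMem hjU]
      have hpU : ∀ i ∈ U, b1.p i ∈ P := by
        intro i hi
        have := hpP i (Finset.mem_insert_of_mem hi)
        rwa [e3 i (fun h => hjU (h ▸ hi)) (fun h => hk (h ▸ hUT hi))] at this
      have hJ : J1 ≤ P := by
        rw [hJ1, Ideal.span_le]; rintro _ ⟨i, hi, rfl⟩; exact hpU i hi
      obtain ⟨Q, hQ, hQP, hKQ⟩ := MP_exists hK hP hKP hJ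
      have hmkQ : b.m k ∉ Q := fun h => hmk (hQP h)
      refine ⟨hP, Q, ha K hK Q (MP_prime hQ) hKQ (fun i hi => MP_le hQ
        (Ideal.subset_span ⟨i, hi, rfl⟩)) hmkQ, lt_of_le_of_ne hQP ?_⟩
      rintro rfl
      apply hξ1 Q hQ hmk
      rw [← e2]; exact hpP j (Finset.mem_insert_self _ _)
    · rintro Q hQ ⟨i, hi, hiQ⟩
      rw [e1]
      by_cases hmj : b.m j ∈ Q
      · have hiU : i ∈ U := by
          rcases Finset.mem_insert.1 hi with rfl | h
          · exact absurd hmj hiQ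
          · exact h
        intro hmem
        exact hb1 Q hQ ⟨i, hiU, hiQ⟩ (by simpa using Q.add_mem hmem (Q.mul_mem_left ξ hmj))
      · exact hξ2 Q hQ hmj
    · intro i hi
      by_cases hij : i = j
      · subst hij
        rw [e2, add_sub_right_comm]
        exact Ideal.add_mem _ (hc i hi) (Ideal.mul_mem_left _ _ (Ideal.subset_span rfl))
      · rw [e3 i hij (fun h => hk (h ▸ hi))]; exact hc i hi

lemma gp {F : Set (Ideal R)} (hF : F.Finite) (T : Finset ι) (b : Tri ι R) :
    ∃ b', Reach ⊤ (T.card * (T.card - 1) / 2) b b' ∧ GP F T b' := by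
  induction T using Finset.induction_on with
  | empty => exact ⟨b, .refl _ _, by rintro K _ P _ _ _ ⟨i, hi, _⟩; simp at hi⟩
  | insert k T hk ih =>
    obtain ⟨b1, h1, hg⟩ := ih
    obtain ⟨b2, h2, -, hg2⟩ := gp_step hF T k hk b1 hg
    refine ⟨b2, h1.trans' h2 ?_, hg2⟩
    rw [Finset.card_insert_of_notMem hk, Nat.triangle_succ]

lemma gp2 [Fintype ι] {F : Set (Ideal R)} (hF : F.Finite) (i0 : ι) (b : Tri ι R) (hb : b.Iso) :
    ∃ b', Reach ⊤ (Fintype.card ι * (Fintype.card ι - 1) / 2 + (Fintype.card ι - 1)) b b' ∧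
      ∀ K ∈ F, ∀ P : Ideal R, P.IsPrime → K ≤ P → (∀ i, i ≠ i0 → b'.p i ∈ P) →
        RH K (Fintype.card ι - 1) P := by
  obtain ⟨b1, h1, hg⟩ := gp hF Finset.univ b
  rw [Finset.card_univ] at h1
  have key := Reach.iter (I := (⊤ : Ideal R)) 1 (Finset.univ.erase i0)
    (fun U b' => (∀ i, i ∉ U → b'.p i = b1.p i) ∧
      (∀ i, b'.p i - b1.p i ∈ Ideal.span {b1.p i0}) ∧
      (∀ K ∈ F, ∀ P : Ideal R, P.IsPrime → K ≤ P → (∀ i ∈ U, b'.p i ∈ P) → b1.p i0 ∉ P →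
        RH K U.card P)) ?_ b1 ⟨fun _ _ => rfl, by simp, fun K _ P hP hKP _ _ => ⟨hP, hKP⟩⟩
  · obtain ⟨b2, h2, -, hc, ha⟩ := key
    rw [Finset.card_erase_of_mem (Finset.mem_univ _), Finset.card_univ, one_mul] at h2
    refine ⟨b2, h1.trans h2, ?_⟩
    intro K hK P hP hKP hp
    by_cases h0 : b1.p i0 ∈ P
    · have h0P : Ideal.span {b1.p i0} ≤ P := by rw [Ideal.span_le]; simpa using h0
      have hall : ∀ i, b1.p i ∈ P := by
        intro i
        by_cases hi : i = i0
        · rwa [hi]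
        · simpa using P.sub_mem (hp i hi) (h0P (hc i))
      have := hg K hK P hP hKP (fun i _ => hall i) (by
        by_contra! hcon
        exact (h1.iso hb).2 P hP ⟨hall, fun i => hcon i (Finset.mem_univ i)⟩)
      simpa using this
    · have := ha K hK P hP hKP (fun i hi => hp i (Finset.ne_of_mem_erase hi)) h0
      simpa using this
  · rintro U j b2 hj hjU hU ⟨hp, hc, ha⟩
    have hj0 : j ≠ i0 := Finset.ne_of_mem_erase hj
    have h0U : i0 ∉ U := fun h => (Finset.ne_of_mem_erase (hU h)) rfl
    obtain ⟨ξ, hξ⟩ := avoid_set {Q ∈ MP F (Ideal.span (b2.p '' U)) | b1.p i0 ∉ Q}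
      ((MP_finite hF _).subset (fun _ h => h.1)) (fun Q h => MP_prime h.1)
      (fun _ => b2.p j) (fun _ => b1.p i0) (fun Q h => .inr h.2)
    have e1 : (b2.levi j i0 ξ).p j = b2.p j + ξ * b1.p i0 := by
      simp [Tri.levi, hp i0 h0U]
    have e2 : ∀ i, i ≠ j → (b2.levi j i0 ξ).p i = b2.p i := by
      intro i hi; simp [Tri.levi, hi]
    refine ⟨b2.levi j i0 ξ, (Step.levi b2 j i0 hj0 ξ Submodule.mem_top).reach, ?_, ?_, ?_⟩
    · intro i hi
      rw [Finset.mem_insert, not_or] at hi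
      rw [e2 i hi.1, hp i hi.2]
    · intro i
      by_cases hij : i = j
      · subst hij
        rw [e1, add_sub_right_comm]
        exact Ideal.add_mem _ (hc i) (Ideal.mul_mem_left _ _ (Ideal.subset_span rfl))
      · rw [e2 i hij]; exact hc i
    · intro K hK P hP hKP hpP h0
      rw [Finset.card_insert_of_notMem hjU]
      have hJ : Ideal.span (b2.p '' U) ≤ P := by
        rw [Ideal.span_le]; rintro _ ⟨i, hi, rfl⟩
        have := hpP i (Finset.mem_insert_of_mem hi)
        rwa [e2 i (fun h => hjU (h ▸ hi))] at this
      obtain ⟨Q, hQ, hQP, hKQ⟩ := MP_exists hK hP hKP hJ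
      have h0Q : b1.p i0 ∉ Q := fun h => h0 (hQP h)
      refine ⟨hP, Q, ha K hK Q (MP_prime hQ) hKQ (fun i hi => MP_le hQ
        (Ideal.subset_span ⟨i, hi, rfl⟩)) h0Q, lt_of_le_of_ne hQP ?_⟩
      rintro rfl
      apply hξ Q ⟨hQ, h0⟩
      rw [← e1]; exact hpP j (Finset.mem_insert_self _ _)

end Tri
end Part3

section Part4
namespace Tri
variable {ι : Type*} [DecidableEq ι] [Fintype ι] {R : Type*} [CommRing R]

lemma setp (i0 : ι) (b : Tri ι R) (a : ι → R) :
    ∃ b', Reach ⊤ (Fintype.card ι - 1) b b' ∧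
      b'.p i0 = b.p i0 + ∑ i ∈ Finset.univ.erase i0, a i * b.p i ∧
      ∀ i, i ≠ i0 → b'.p i = b.p i := by
  obtain ⟨b', h, h1, h2⟩ := Reach.iter (I := (⊤ : Ideal R)) 1 (Finset.univ.erase i0)
    (fun U b' => b'.p i0 = b.p i0 + ∑ i ∈ U, a i * b.p i ∧ ∀ i, i ≠ i0 → b'.p i = b.p i)
    (by
      rintro U j b1 hj hjU hU ⟨h1, h2⟩
      have hj0 := Finset.ne_of_mem_erase hj
      refine ⟨b1.levi i0 j (a j), (Step.levi b1 i0 j hj0.symm _ Submodule.mem_top).reach, ?_, ?_⟩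
      · rw [Finset.sum_insert hjU]
        simp only [Tri.levi, Function.update_self, h1, h2 j hj0]; ring
      · intro i hi; simp [Tri.levi, hi, h2 i hi]) b (by simp)
  exact ⟨b', by simpa using h, h1, h2⟩

/-- the standard vector -/
def std (i0 : ι) : Tri ι R := ⟨fun i => if i = i0 then 1 else 0, 0, fun _ => 0⟩

lemma clear (i0 : ι) (b : Tri ι R) (hq : b.q = 0) (h0 : b.p i0 = 1) :
    Reach ⊤ (2 * Fintype.card ι - 1) b (std i0) := by
  obtain ⟨b1, h1, h10, h11⟩ := Reach.iter (I := (⊤ : Ideal R)) 1 (Finset.univ.erase i0)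
    (fun U b' => b'.p i0 = 1 ∧ ∀ i ∈ U, b'.p i = 0)
    (by
      rintro U j b1 hj hjU hU ⟨h1, h2⟩
      have hj0 := Finset.ne_of_mem_erase hj
      refine ⟨b1.levi j i0 (- b1.p j), (Step.levi b1 j i0 hj0 _ Submodule.mem_top).reach, ?_, ?_⟩
      · simp [Tri.levi, hj0.symm, h1]
      · intro i hi
        by_cases hij : i = j
        · subst hij; simp [Tri.levi, h1]
        · have := (Finset.mem_insert.1 hi).resolve_left hij
          simp [Tri.levi, hij, h2 i this]) b (by simp [h0])
  have hp1 : ∀ i, i ≠ i0 → b1.p i = 0 := fun i hi => h11 i (by simp [hi])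
  have h2 := (Step.sdown b1 i0 b1.c (Submodule.mem_top (R := R))).reach
  set b2 := b1.sdown i0 b1.c with hb2
  have hc2 : b2.c = 0 := by simp [hb2, Tri.sdown, h10]
  have hp2 : b2.p = b1.p := rfl
  obtain ⟨b3, h3, h30, h31, h32⟩ := Reach.iter (I := (⊤ : Ideal R)) 1 (Finset.univ.erase i0)
    (fun U b' => b'.p = b1.p ∧ b'.c = 0 ∧ ∀ i ∈ U, b'.m i = 0)
    (by
      rintro U j b1 hj hjU hU ⟨h1, h2, h3⟩
      have hj0 := Finset.ne_of_mem_erase hj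
      refine ⟨b1.down j i0 (- b1.m j), (Step.down b1 j i0 hj0 _ Submodule.mem_top).reach, h1, h2, ?_⟩
      intro i hi
      by_cases hij : i = j
      · subst hij; simp [Tri.down, h1, hj0, h10]
      · have := (Finset.mem_insert.1 hi).resolve_left hij
        have hi0 := Finset.ne_of_mem_erase (hU this)
        simp [Tri.down, hij, hi0, h3 i this]) b2 (by simp [hp2, hc2])
  have hcard : 0 < Fintype.card ι := Fintype.card_pos_iff.2 ⟨i0⟩
  have hr := (h1.trans h2).trans h3
  have hq3 : b3.q = 0 := by rw [hr.q_eq, hq]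
  have hm0 : b3.m i0 = 0 := by
    rw [q, h31, ← Finset.add_sum_erase _ _ (Finset.mem_univ i0), h30, h10] at hq3
    rw [Finset.sum_eq_zero] at hq3
    · simpa using hq3
    · intro i hi; rw [h32 i hi, mul_zero]
  have : b3 = std i0 := by
    ext i
    · rw [h30]; by_cases hi : i = i0
      · simp [std, hi, h10]
      · simp [std, hi, hp1 i hi]
    · exact h31
    · by_cases hi : i = i0
      · rw [hi, hm0]; rfl
      · rw [h32 i (by simp [hi])]; rfl
  rw [← this]
  refine hr.mono ?_
  simp only [Finset.card_erase_of_mem (Finset.mem_univ _), Finset.card_univ]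
  omega

end Tri
end Part4

section Part5
open Polynomial

section HT
variable {R : Type*} [CommRing R]

attribute [local instance] Polynomial.algebra Polynomial.isLocalization in
lemma height_le_one_of_comap_bot {S : Type*} [CommRing S] [IsDomain S] [IsNoetherianRing S]
    (P : Ideal S[X]) [P.IsPrime] (h : P.comap C = ⊥) : P.height ≤ 1 := by
  let K := FractionRing S
  have disj : Disjoint ((nonZeroDivisors S).map C : Set S[X]) P := by
    refine Set.disjoint_left.mpr fun a ⟨b, hb⟩ ha ↦ ?_
    have : b ∈ P.comap C := by rw [Ideal.mem_comap, hb.2]; exact ha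
    rw [h, Ideal.mem_bot] at this
    exact nonZeroDivisors.ne_zero hb.1 this
  have eq2 : (P.map (algebraMap S[X] K[X])).height = P.height :=
    (IsLocalization.height_map_of_disjoint (Submonoid.map C <| nonZeroDivisors S) _ disj)
  rw [← eq2]
  have hp : (P.map (algebraMap S[X] K[X])).IsPrime :=
    IsLocalization.isPrime_of_isPrime_disjoint (Submonoid.map C <| nonZeroDivisors S) _ _
      inferInstance disj
  have h1 := Ideal.height_le_ringKrullDim_of_ne_top hp.ne_top
  rw [Polynomial.ringKrullDim_of_isNoetherianRing, ringKrullDim_eq_zero_of_field, zero_add] at h1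
  exact_mod_cast h1

variable [IsNoetherianRing R]

lemma height_poly_le (P : Ideal R[X]) [P.IsPrime] : P.height ≤ (P.comap C).height + 1 := by
  set p := P.comap C with hpdef
  haveI : P.LiesOver p := ⟨rfl⟩
  refine (Ideal.height_le_height_add_of_liesOver p P).trans ?_
  gcongr
  let e : (R[X] ⧸ (p.map (algebraMap R R[X]))) ≃+* (R ⧸ p)[X] :=
    (Ideal.polynomialQuotientEquivQuotientPolynomial p).symm
  rw [← e.height_map]
  haveI h1 : (P.map (Ideal.Quotient.mk <| p.map (algebraMap R R[X]))).IsPrime := by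
    refine Ideal.map_isPrime_of_surjective Ideal.Quotient.mk_surjective ?_
    rw [Ideal.mk_ker]; exact Ideal.map_comap_le
  haveI : (Ideal.map e (P.map (Ideal.Quotient.mk <| p.map (algebraMap R R[X])))).IsPrime :=
    Ideal.map_isPrime_of_equiv e
  apply height_le_one_of_comap_bot
  rw [eq_bot_iff]
  intro x hx
  obtain ⟨x, rfl⟩ := Ideal.Quotient.mk_surjective x
  rw [Ideal.mem_comap, ← Ideal.comap_symm, Ideal.mem_comap] at hx
  have h2 : (e.symm (C (Ideal.Quotient.mk p x))) = Ideal.Quotient.mk _ (C x) := by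
    have := Ideal.polynomialQuotientEquivQuotientPolynomial_map_mk p (C x)
    rw [RingEquiv.symm_symm]
    have h3 := Ideal.polynomialQuotientEquivQuotientPolynomial_map_mk p (C x)
    first
      | simpa using h3
      | (simp at h3 ⊢)
  rw [h2, Ideal.mem_map_iff_of_surjective _ Ideal.Quotient.mk_surjective] at hx
  obtain ⟨y, hy, hxy⟩ := hx
  rw [Ideal.Quotient.eq] at hxy
  have hle : p.map (algebraMap R R[X]) ≤ P := Ideal.map_comap_le
  have : C x ∈ P := by simpa using P.sub_mem hy (hle hxy)
  rw [Ideal.mem_bot, Ideal.Quotient.eq_zero_iff_mem]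
  exact this

lemma height_poly_map (P : Ideal R[X]) [P.IsPrime] (h : (P.comap C).map C = P) :
    P.height ≤ (P.comap C).height := by
  haveI : P.LiesOver (P.comap C) := ⟨rfl⟩
  refine (Ideal.height_le_height_add_of_liesOver (P.comap C) P).trans ?_
  have : P.map (Ideal.Quotient.mk <| (P.comap C).map (algebraMap R R[X])) = ⊥ := by
    rw [Ideal.map_eq_bot_iff_le_ker, Ideal.mk_ker]
    exact h.ge
  rw [this]
  have hne : ((P.comap C).map (algebraMap R R[X])) ≠ ⊤ := by
    intro h'
    apply (inferInstance : P.IsPrime).ne_top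
    rw [← h]; exact h'
  haveI : Nontrivial (R[X] ⧸ (P.comap C).map (algebraMap R R[X])) := Ideal.Quotient.nontrivial_iff.2 hne
  simp

lemma height_lc (I : Ideal R[X]) (h : ℕ∞) (hI : ∀ P : Ideal R[X], P.IsPrime → I ≤ P → h ≤ P.height)
    (q : Ideal R) [hq : q.IsPrime] (hle : I.leadingCoeff ≤ q) : h ≤ q.height := by
  let M : Submonoid R[X] :=
    { carrier := {f | f.leadingCoeff ∉ q}
      one_mem' := by
        show (1 : R[X]).leadingCoeff ∉ q
        rw [leadingCoeff_one]; exact fun h => hq.ne_top ((Ideal.eq_top_iff_one q).2 h)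
      mul_mem' := by
        intro f g hf hg
        have h1 : f.leadingCoeff * g.leadingCoeff ∉ q := fun h => (hq.mem_or_mem h).elim hf hg
        have : (f * g).leadingCoeff = f.leadingCoeff * g.leadingCoeff :=
          leadingCoeff_mul' (fun h => h1 (h ▸ q.zero_mem))
        show (f * g).leadingCoeff ∉ q
        rwa [this] }
  have hd : Disjoint (I : Set R[X]) M := by
    refine Set.disjoint_left.2 fun f hf hM => hM (hle ?_)
    exact (Ideal.mem_leadingCoeff I _).2 ⟨f, hf, rfl⟩
  obtain ⟨P, hP, hIP, hdP⟩ := Ideal.exists_le_prime_disjoint I M hd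
  refine (hI P hP hIP).trans ?_
  have hlc : P.leadingCoeff ≤ q := by
    intro x hx
    obtain ⟨f, hf, rfl⟩ := (Ideal.mem_leadingCoeff P _).1 hx
    by_contra hcon
    exact Set.disjoint_left.1 hdP hf hcon
  have hpl : P.comap C ≤ P.leadingCoeff := by
    intro x hx
    exact (Ideal.mem_leadingCoeff P _).2 ⟨C x, hx, leadingCoeff_C x⟩
  by_cases heq : P.comap C = P.leadingCoeff
  · exact (height_poly_map P (by first | exact Ideal.map_C_comap_of_comap_eq_leadingCoeff heq | exact Ideal.map_C_comap_of_comap_eq_leadingCoeff _ heq)).trans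
      (Ideal.height_mono (hpl.trans hlc))
  · have hlt : P.comap C < q := lt_of_lt_of_le (lt_of_le_of_ne hpl heq) hlc
    exact (height_poly_le P).trans (Ideal.height_add_one_le_of_lt_of_isPrime hlt)
end HT
end Part5

section Part6
open Polynomial

section Lead
variable {C₀ : Type*} [CommRing C₀] {S : Type*} [CommRing S] [Algebra C₀ S]

lemma deg_bound {n : ℕ} (w : Fin n → ℕ) (f : MvPolynomial (Fin n) C₀) :
    ∃ B : ℕ, ∀ u : Fin n → S[X], (∀ i, (u i).natDegree ≤ w i) →
      (MvPolynomial.aeval u f).natDegree ≤ B := by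
  induction f using MvPolynomial.induction_on with
  | C a =>
    refine ⟨0, fun u _ => ?_⟩
    rw [MvPolynomial.aeval_C, IsScalarTower.algebraMap_apply C₀ S S[X]]
    simp
  | add f g hf hg =>
    obtain ⟨B, hB⟩ := hf
    obtain ⟨B', hB'⟩ := hg
    refine ⟨max B B', fun u hu => ?_⟩
    rw [map_add]
    exact (natDegree_add_le _ _).trans (max_le_max (hB u hu) (hB' u hu))
  | mul_X f i hf =>
    obtain ⟨B, hB⟩ := hf
    refine ⟨B + w i, fun u hu => ?_⟩
    rw [map_mul, MvPolynomial.aeval_X]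
    exact natDegree_mul_le.trans (add_le_add (hB u hu) (hu i))

lemma aeval_finSucc {n : ℕ} (u : Fin (n + 1) → S[X]) (f : MvPolynomial (Fin (n + 1)) C₀) :
    MvPolynomial.aeval u f =
      Polynomial.eval₂ ((MvPolynomial.aeval (fun i => u (Fin.succ i)) :
        MvPolynomial (Fin n) C₀ →ₐ[C₀] S[X]) : MvPolynomial (Fin n) C₀ →+* S[X]) (u 0)
        (MvPolynomial.finSuccEquiv C₀ n f) := by
  induction f using MvPolynomial.induction_on with
  | C a =>
    have : MvPolynomial.finSuccEquiv C₀ n (MvPolynomial.C a) = Polynomial.C (MvPolynomial.C a) := by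
      rw [← MvPolynomial.finSuccEquiv_comp_C_eq_C]; simp
    rw [this]; simp
  | add f g hf hg => rw [map_add, hf, hg, map_add, eval₂_add]
  | mul_X f i hf =>
    rw [map_mul, hf, map_mul, eval₂_mul]
    congr 1
    refine Fin.cases ?_ (fun i => ?_) i
    · simp [MvPolynomial.finSuccEquiv_X_zero]
    · simp [MvPolynomial.finSuccEquiv_X_succ]

variable [IsNoetherianRing C₀] [Nontrivial S]

lemma lead (h : ℕ) (hdim : ringKrullDim C₀ < (h : WithBot ℕ∞)) (n : ℕ) :
    ∀ (I : Ideal (MvPolynomial (Fin n) C₀))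
      (hI : ∀ P : Ideal (MvPolynomial (Fin n) C₀), P.IsPrime → I ≤ P → (h : ℕ∞) ≤ P.height),
      ∃ f ∈ I, ∃ w : Fin n → ℕ, (∀ i, 2 ≤ w i) ∧ ∀ u : Fin n → S[X],
        (∀ i, (u i).Monic ∧ (u i).natDegree = w i) → (MvPolynomial.aeval u f).Monic := by
  induction n with
  | zero =>
    intro I hI
    have : I = ⊤ := by
      by_contra hne
      obtain ⟨P, hP, hIP⟩ := Ideal.exists_le_maximal I hne
      have h1 := hI P hP.isPrime hIP
      have h2 := Ideal.height_le_ringKrullDim_of_ne_top hP.ne_top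
      rw [ringKrullDim_mvPolynomial_of_isEmpty] at h2
      have h3 : ((h : ℕ∞) : WithBot ℕ∞) ≤ (P.height : WithBot ℕ∞) := by exact_mod_cast h1
      exact absurd (h3.trans h2) (not_le.2 (by exact_mod_cast hdim))
    refine ⟨1, by simp [this], fun _ => 2, fun _ => le_rfl, fun u _ => by simp⟩
  | succ n ih =>
    intro I hI
    let e := (MvPolynomial.finSuccEquiv C₀ n).toRingEquiv
    set I' : Ideal (MvPolynomial (Fin n) C₀)[X] := I.map e with hI'
    have hI'h : ∀ P : Ideal (MvPolynomial (Fin n) C₀)[X], P.IsPrime → I' ≤ P →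
        (h : ℕ∞) ≤ P.height := by
      intro P hP hle
      rw [← e.height_comap]
      exact hI _ inferInstance (Ideal.map_le_iff_le_comap.1 hle)
    obtain ⟨g, hg, w, hw2, hw⟩ := ih I'.leadingCoeff (fun P hP hle => by
      haveI := hP
      exact height_lc I' h hI'h P hle)
    obtain ⟨F, hF, rfl⟩ := (Ideal.mem_leadingCoeff I' _).1 hg
    choose B hB using fun k => deg_bound (S := S) w (F.coeff k)
    let w0 := (∑ k ∈ Finset.range (F.natDegree + 1), B k) + 2
    have hw0 : ∀ k ∈ Finset.range (F.natDegree + 1), B k < w0 := by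
      intro k hk
      have := Finset.single_le_sum (f := B) (fun _ _ => Nat.zero_le _) hk
      omega
    refine ⟨e.symm F, ?_, Fin.cons w0 w, ?_, ?_⟩
    · obtain ⟨f, hf, rfl⟩ := (Ideal.mem_map_iff_of_surjective e e.surjective).1 hF
      simpa using hf
    · intro i
      refine Fin.cases ?_ (fun i => ?_) i
      · simp [w0]
      · simpa using hw2 i
    · intro u hu
      have hu0 : (u 0).Monic ∧ (u 0).natDegree = w0 := hu 0
      have hus : ∀ i : Fin n, (u i.succ).Monic ∧ (u i.succ).natDegree = w i := fun i => by
        simpa using hu i.succ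
      have heF : MvPolynomial.finSuccEquiv C₀ n (e.symm F) = F := e.apply_symm_apply F
      rw [aeval_finSucc, heF, eval₂_eq_sum_range, Finset.sum_range_succ, add_comm]
      have hlead := hw (fun i => u i.succ) hus
      have hmon : ((((MvPolynomial.aeval (fun i => u (Fin.succ i)) :
        MvPolynomial (Fin n) C₀ →ₐ[C₀] S[X]) : MvPolynomial (Fin n) C₀ →+* S[X])
          (F.coeff F.natDegree)) * u 0 ^ F.natDegree).Monic := by
        exact hlead.mul (hu0.1.pow _)
      refine hmon.add_of_left ?_
      have hdeg : ((F.natDegree * w0 : ℕ) : WithBot ℕ) ≤ ((((MvPolynomial.aeval (fun i => u (Fin.succ i)) :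
        MvPolynomial (Fin n) C₀ →ₐ[C₀] S[X]) : MvPolynomial (Fin n) C₀ →+* S[X])
          (F.coeff F.natDegree)) * u 0 ^ F.natDegree).degree := by
        rw [degree_eq_natDegree hmon.ne_zero]
        have h1 : (MvPolynomial.aeval (fun i => u (Fin.succ i)) (F.coeff F.natDegree)).Monic := hlead
        have h2 := h1.natDegree_mul (hu0.1.pow F.natDegree)
        rw [hu0.1.natDegree_pow, hu0.2] at h2
        have h3 : ((((MvPolynomial.aeval (fun i => u (Fin.succ i)) :
          MvPolynomial (Fin n) C₀ →ₐ[C₀] S[X]) : MvPolynomial (Fin n) C₀ →+* S[X])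
          (F.coeff F.natDegree)) * u 0 ^ F.natDegree).natDegree = _ := h2
        rw [h3]
        exact_mod_cast Nat.le_add_left _ _
      refine lt_of_lt_of_le ?_ hdeg
      refine (degree_sum_le _ _).trans_lt ?_
      rw [Finset.sup_lt_iff (WithBot.bot_lt_coe _)]
      intro k hk
      refine lt_of_le_of_lt degree_le_natDegree ?_
      norm_cast
      have hkd := Finset.mem_range.1 hk
      have h1 : (MvPolynomial.aeval (fun i => u (Fin.succ i)) (F.coeff k)).natDegree ≤ B k :=
        hB k _ (fun i => (hus i).2.le)
      have h2 := hw0 k (Finset.mem_range.2 (by omega))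
      have h3 : (u 0 ^ k).natDegree = k * w0 := by rw [hu0.1.natDegree_pow, hu0.2]
      refine lt_of_le_of_lt natDegree_mul_le ?_
      rw [h3]
      calc _ < w0 + k * w0 := Nat.add_lt_add_right (lt_of_le_of_lt h1 h2) _
        _ = (k + 1) * w0 := by ring
        _ ≤ F.natDegree * w0 := Nat.mul_le_mul_right _ hkd

end Lead
end Part6

section Part7
open Polynomial

namespace Tri
variable {ι : Type*} [DecidableEq ι] {R : Type*} [CommRing R]

lemma torsion_stab [IsNoetherianRing R] (s : R) :
    ∃ K : ℕ, ∀ x : R, s ^ (K + 1) * x = 0 → s ^ K * x = 0 := by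
  let f : ℕ →o Submodule R R :=
    { toFun := fun k => LinearMap.ker (LinearMap.lsmul R R (s ^ k))
      monotone' := by
        intro a b hab x hx
        simp only [LinearMap.mem_ker, LinearMap.lsmul_apply, smul_eq_mul] at hx ⊢
        obtain ⟨c, rfl⟩ := Nat.exists_eq_add_of_le hab
        rw [pow_add, mul_comm (s ^ a), mul_assoc, hx, mul_zero] }
  obtain ⟨K, hK⟩ := monotone_stabilizes_iff_noetherian.2 (inferInstance : IsNoetherian R R) f
  refine ⟨K, fun x hx => ?_⟩
  have h1 : x ∈ f (K + 1) := by
    show x ∈ LinearMap.ker (LinearMap.lsmul R R (s ^ (K + 1)))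
    simpa using hx
  rw [← hK (K + 1) (by omega)] at h1
  have h2 : x ∈ LinearMap.ker (LinearMap.lsmul R R (s ^ K)) := h1
  simpa using h2

lemma levi_p_self (b : Tri ι R) (i j : ι) (ξ : R) : (b.levi i j ξ).p i = b.p i + ξ * b.p j := by
  simp [Tri.levi]
lemma levi_p_ne (b : Tri ι R) (i j k : ι) (ξ : R) (h : k ≠ i) : (b.levi i j ξ).p k = b.p k := by
  simp [Tri.levi, h]

lemma sub7 (b : Tri ι R) (i0 i1 i2 : ι) (h01 : i0 ≠ i1) (h02 : i0 ≠ i2) (h12 : i1 ≠ i2)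
    (s z1 z2 η : R) (f : ℕ) (hz : z1 * b.p i0 + z2 * b.p i1 + s * b.p i2 = s) :
    ∃ b' z2', Reach (Ideal.span {s ^ f}) 7 b b' ∧
      b'.p i0 = b.p i0 + s ^ (2 * f + 3) * η ∧ b'.p i1 = b.p i1 ∧
      z1 * b'.p i0 + z2' * b'.p i1 + s * b'.p i2 = s := by
  have hs : s ^ f ∈ Ideal.span {s ^ f} := Ideal.subset_span rfl
  have hm : ∀ x, s ^ f * x ∈ Ideal.span {s ^ f} := fun x => Ideal.mul_mem_right _ _ hs
  let b1 := b.levi i1 i0 (s ^ f * (s * z1))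
  let b2 := b1.levi i1 i2 (s ^ f * (s * s))
  let b3 := b2.levi i0 i1 (s ^ f * (s * η))
  let b4 := b3.levi i2 i1 (s ^ f * (-(z1 * η)))
  let b5 := b4.levi i1 i0 (s ^ f * (-(s * z1)))
  let b6 := b5.levi i1 i2 (s ^ f * (-(s * s)))
  let b7 := b6.levi i0 i1 (s ^ f * (-(s * η) + s * s ^ f * s * η * z2))
  have r : Reach (Ideal.span {s ^ f}) 7 b b7 :=
    .head (.levi b i1 i0 h01.symm _ (hm _)) <| .head (.levi b1 i1 i2 h12 _ (hm _)) <|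
    .head (.levi b2 i0 i1 h01 _ (hm _)) <| .head (.levi b3 i2 i1 h12.symm _ (hm _)) <|
    .head (.levi b4 i1 i0 h01.symm _ (hm _)) <| .head (.levi b5 i1 i2 h12 _ (hm _)) <|
    .head (.levi b6 i0 i1 h01 _ (hm _)) (.refl 0 _)
  have hz' : s * b.p i2 = s - z1 * b.p i0 - z2 * b.p i1 := by linear_combination hz
  refine ⟨b7, z2 + z1 * (s ^ f * s * η) * (1 - s ^ f * s * z2), r, ?_, ?_, ?_⟩
  · simp only [b1, b2, b3, b4, b5, b6, b7, levi_p_self, levi_p_ne, ne_eq, h01, h02, h12, h01.symm,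
      h02.symm, h12.symm, not_false_eq_true]
    linear_combination (s ^ f * s * η * s ^ f * s - s ^ f * s * η * s ^ f * s * (1 - s ^ f * s * z2) * 0) * hz
  · simp only [b1, b2, b3, b4, b5, b6, b7, levi_p_self, levi_p_ne, ne_eq, h01, h02, h12, h01.symm,
      h02.symm, h12.symm, not_false_eq_true]
    ring
  · simp only [b1, b2, b3, b4, b5, b6, b7, levi_p_self, levi_p_ne, ne_eq, h01, h02, h12, h01.symm,
      h02.symm, h12.symm, not_false_eq_true]
    linear_combination (1) * hz

lemma step1 (b : Tri ι R) (i0 i1 i2 : ι) (h01 : i0 ≠ i1) (h02 : i0 ≠ i2) (h12 : i1 ≠ i2)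
    (s a a' η η' : R) (f : ℕ) (ha : a * b.p i0 + a' * b.p i1 = s) :
    ∃ b', Reach (Ideal.span {s ^ f}) 14 b b' ∧
      b'.p i0 = b.p i0 + s ^ (2 * f + 3) * η ∧ b'.p i1 = b.p i1 + s ^ (2 * f + 3) * η' := by
  obtain ⟨b1, z2, hr, h0, h1, hz⟩ := sub7 b i0 i1 i2 h01 h02 h12 s ((1 - b.p i2) * a)
    ((1 - b.p i2) * a') η f (by linear_combination (1 - b.p i2) * ha)
  obtain ⟨b2, z1, hr', h0', h1', -⟩ := sub7 b1 i1 i0 i2 h01.symm h12 h02 s z2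
    ((1 - b.p i2) * a) η' f (by linear_combination hz)
  exact ⟨b2, hr.trans hr', by rw [h1', h0], by rw [h0', h1]⟩

variable [Fintype ι]

lemma step23 (b β : Tri ι R) (i0 i1 : ι) (h01 : i0 ≠ i1) (s a a' : R) (K : ℕ)
    (hK : ∀ x : R, s ^ (K + 1) * x = 0 → s ^ K * x = 0)
    (h0 : b.p i0 = β.p i0) (h1 : b.p i1 = β.p i1) (ha : a * β.p i0 + a' * β.p i1 = s)
    (hc : Cong (Ideal.span {s ^ (K + 2)}) b β) (hq : b.q = 0) (hqβ : β.q = 0) :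
    Reach ⊤ (4 * Fintype.card ι - 5) b β := by
  set I : Ideal R := Ideal.span {s ^ (K + 1)} with hI
  have hm : ∀ x, s ^ (K + 1) * x ∈ I := fun x => Ideal.mul_mem_right _ _ (Ideal.subset_span rfl)
  set T : Finset ι := (Finset.univ.erase i0).erase i1 with hT
  have hTm : ∀ i, i ∈ T ↔ i ≠ i1 ∧ i ≠ i0 := fun i => by simp [hT]
  have hTc : T.card = Fintype.card ι - 2 := by
    rw [hT, Finset.card_erase_of_mem (by simp [h01.symm]), Finset.card_erase_of_mem (by simp),
      Finset.card_univ]; rfl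
  have hcard : 2 ≤ Fintype.card ι := by
    have := Finset.card_le_univ ({i0, i1} : Finset ι)
    rwa [Finset.card_pair h01] at this
  have hdiv : ∀ d ∈ Ideal.span {s ^ (K + 2)}, ∃ e, d = s * (s ^ (K + 1) * e) := by
    intro d hd
    obtain ⟨e, rfl⟩ := Ideal.mem_span_singleton.1 hd
    exact ⟨e, by ring⟩
  -- the `p`-part
  obtain ⟨b1, r1, p0, p1, pT, c1, m1, -⟩ := Reach.iter (I := I) 2 T
    (fun U b' => b'.p i0 = β.p i0 ∧ b'.p i1 = β.p i1 ∧ (∀ i ∈ U, b'.p i = β.p i) ∧ b'.c = b.c ∧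
      (∀ i ∈ T, b'.m i = b.m i) ∧ (∀ i, i ∉ U → b'.p i = b.p i)) (by
    rintro U j b1 hj hjU hU ⟨p0, p1, pU, c1, m1, pn⟩
    obtain ⟨hj1, hj0⟩ := (hTm j).1 hj
    obtain ⟨e, he⟩ := hdiv _ (hc.1 j)
    refine ⟨(b1.levi j i0 (s ^ (K + 1) * (e * a))).levi j i1 (s ^ (K + 1) * (e * a')),
      .head (.levi b1 j i0 hj0 _ (hm _)) (.head (.levi _ j i1 hj1 _ (hm _)) (.refl 0 _)),
      ?_, ?_, ?_, c1, ?_, ?_⟩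
    · rw [levi_p_ne _ _ _ _ _ hj0.symm, levi_p_ne _ _ _ _ _ hj0.symm, p0]
    · rw [levi_p_ne _ _ _ _ _ hj1.symm, levi_p_ne _ _ _ _ _ hj1.symm, p1]
    · intro i hi
      by_cases hij : i = j
      · subst hij
        rw [levi_p_self, levi_p_self, levi_p_ne _ _ _ _ _ hj1.symm, p0, p1, pn i hjU]
        linear_combination (s ^ (K + 1) * e) * ha - he
      · rw [levi_p_ne _ _ _ _ _ hij, levi_p_ne _ _ _ _ _ hij]
        exact pU i ((Finset.mem_insert.1 hi).resolve_left hij)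
    · intro i hi
      obtain ⟨hi1, hi0⟩ := (hTm i).1 hi
      simp [Tri.levi, hi1, hi0, m1 i hi]
    · intro i hi
      rw [Finset.mem_insert, not_or] at hi
      rw [levi_p_ne _ _ _ _ _ hi.1, levi_p_ne _ _ _ _ _ hi.1, pn i hi.2]) b
    ⟨h0, h1, by simp, rfl, fun _ _ => rfl, fun _ _ => rfl⟩
  have hp1 : b1.p = β.p := by
    funext i
    by_cases h : i = i0
    · rw [h, p0]
    · by_cases h' : i = i1
      · rw [h', p1]
      · exact pT i ((hTm i).2 ⟨h', h⟩)
  -- the `c`-part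
  obtain ⟨b2, r2, hp2, c2, m2⟩ : ∃ b2, Reach I 2 b1 b2 ∧ b2.p = β.p ∧ b2.c = β.c ∧
      ∀ i ∈ T, b2.m i = b.m i := by
    obtain ⟨e, he⟩ := hdiv _ hc.2.1
    refine ⟨(b1.sdown i0 (s ^ (K + 1) * (-(e * a)))).sdown i1 (s ^ (K + 1) * (-(e * a'))),
      .head (.sdown b1 i0 _ (hm _)) (.head (.sdown _ i1 _ (hm _)) (.refl 0 _)), hp1, ?_, ?_⟩
    · simp only [Tri.sdown, hp1, c1]
      linear_combination (s ^ (K + 1) * e) * ha - he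
    · intro i hi
      obtain ⟨hi1, hi0⟩ := (hTm i).1 hi
      simp [Tri.sdown, hi1, hi0, m1 i hi]
  -- the `m`-part
  obtain ⟨b3, r3, hp3, c3, m3, -⟩ := Reach.iter (I := I) 2 T
    (fun U b' => b'.p = β.p ∧ b'.c = β.c ∧ (∀ i ∈ U, b'.m i = β.m i) ∧
      (∀ i ∈ T, i ∉ U → b'.m i = b.m i)) (by
    rintro U j b1 hj hjU hU ⟨p1, c1, mU, mn⟩
    obtain ⟨hj1, hj0⟩ := (hTm j).1 hj
    obtain ⟨e, he⟩ := hdiv _ (hc.2.2 j)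
    refine ⟨(b1.down j i0 (s ^ (K + 1) * (e * a))).down j i1 (s ^ (K + 1) * (e * a')),
      .head (.down b1 j i0 hj0 _ (hm _)) (.head (.down _ j i1 hj1 _ (hm _)) (.refl 0 _)),
      p1, c1, ?_, ?_⟩
    · intro i hi
      by_cases hij : i = j
      · subst hij
        simp only [Tri.down, p1, ne_eq, hj1, hj0, not_false_eq_true, Function.update_of_ne,
          Function.update_self, mn i hj hjU]
        linear_combination (s ^ (K + 1) * e) * ha - he
      · have hiU := (Finset.mem_insert.1 hi).resolve_left hij
        obtain ⟨hi1, hi0⟩ := (hTm i).1 (hU hiU)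
        simp [Tri.down, hi1, hi0, hij, mU i hiU]
    · intro i hi hin
      rw [Finset.mem_insert, not_or] at hin
      obtain ⟨hi1, hi0⟩ := (hTm i).1 hi
      simp [Tri.down, hi1, hi0, hin.1, mn i hi hin.2]) b2
    ⟨hp2, c2, by simp, fun i hi _ => m2 i hi⟩
  have rr := (r1.trans r2).trans r3
  have hle : Ideal.span {s ^ (K + 2)} ≤ I := by
    rw [Ideal.span_singleton_le_span_singleton]; exact ⟨s, by ring⟩
  have hdiff : ∀ i, ∃ e, b3.m i - β.m i = s ^ (K + 1) * e := by
    intro i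
    have : b3.m i - β.m i ∈ I := by
      have := I.sub_mem (rr.cong.2.2 i) (hle (hc.2.2 i))
      convert this using 1; ring
    obtain ⟨e, he⟩ := Ideal.mem_span_singleton.1 this
    exact ⟨e, he⟩
  obtain ⟨t0, ht0⟩ := hdiff i0
  obtain ⟨t1, ht1⟩ := hdiff i1
  have hq3 : b3.q = 0 := by rw [rr.q_eq, hq]
  have hrel : s ^ (K + 1) * (t0 * β.p i0 + t1 * β.p i1) = 0 := by
    have key : ∀ g : ι → R, ∑ k, g k = g i0 + g i1 + ∑ k ∈ T, g k := by
      intro g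
      rw [add_assoc, hT, Finset.add_sum_erase _ _ (by simp [h01.symm]),
        Finset.add_sum_erase _ _ (by simp)]
    rw [q, key, hp3, c3] at hq3
    rw [q, key] at hqβ
    rw [Finset.sum_congr rfl (fun i hi => by rw [m3 i hi] : ∀ i ∈ T, β.p i * b3.m i = β.p i * β.m i)]
      at hq3
    linear_combination hq3 - hqβ - β.p i0 * ht0 - β.p i1 * ht1
  have hrel' := hK _ hrel
  have r4 := (Step.down b3 i0 i1 h01 (a * (s ^ K * t1) - a' * (s ^ K * t0))
    (Submodule.mem_top (R := R))).reach
  have hfin : b3.down i0 i1 (a * (s ^ K * t1) - a' * (s ^ K * t0)) = β := by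
    ext i
    · exact congrFun hp3 i
    · exact c3
    · by_cases hi1 : i = i1
      · subst hi1
        simp only [Tri.down, Function.update_self, hp3]
        linear_combination ht1 - (s ^ K * t1) * ha + a' * hrel'
      · by_cases hi0 : i = i0
        · subst hi0
          simp only [Tri.down, Function.update_self, hp3, ne_eq, hi1, not_false_eq_true,
            Function.update_of_ne]
          linear_combination ht0 - (s ^ K * t0) * ha + a * hrel'
        · simp [Tri.down, hi1, hi0, m3 i ((hTm i).2 ⟨hi1, hi0⟩)]
  rw [hfin] at r4
  refine (rr.ideal_mono le_top).trans' r4 ?_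
  rw [hTc]; omega

lemma patch [IsNoetherianRing R] (B : Tri ι R[X]) (i0 i1 i2 : ι) (h01 : i0 ≠ i1) (h02 : i0 ≠ i2)
    (h12 : i1 ≠ i2) (s : R) (a a' : R[X]) (hq : B.q = 0) (ha : a * B.p i0 + a' * B.p i1 = C s) :
    ∃ k, ∀ t y : R, Reach ⊤ (4 * Fintype.card ι + 9) (B.map (evalRingHom t))
      (B.map (evalRingHom (t + s ^ k * y))) := by
  obtain ⟨K, hK⟩ := torsion_stab s
  refine ⟨2 * (K + 2) + 3, fun t y => ?_⟩
  set t' := t + s ^ (2 * (K + 2) + 3) * y with ht'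
  have hev : ∀ f : R[X], ∃ η, f.eval t' = f.eval t + s ^ (2 * (K + 2) + 3) * η := by
    intro f
    obtain ⟨η, hη⟩ := Polynomial.sub_dvd_eval_sub t' t f
    refine ⟨y * η, ?_⟩
    have : t' - t = s ^ (2 * (K + 2) + 3) * y := by rw [ht']; ring
    rw [this] at hη
    linear_combination hη
  have hev' : ∀ f : R[X], f.eval t' - f.eval t ∈ Ideal.span {s ^ (K + 2)} := by
    intro f
    obtain ⟨η, hη⟩ := hev f
    rw [hη, Ideal.mem_span_singleton]
    exact ⟨s ^ (K + 5) * η, by ring⟩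
  have hat : ∀ x, a.eval x * (B.p i0).eval x + a'.eval x * (B.p i1).eval x = s := by
    intro x
    have := congrArg (Polynomial.eval x) ha
    simpa using this
  obtain ⟨η0, hη0⟩ := hev (B.p i0)
  obtain ⟨η1, hη1⟩ := hev (B.p i1)
  obtain ⟨b1, r1, e0, e1⟩ := step1 (B.map (evalRingHom t)) i0 i1 i2 h01 h02 h12 s (a.eval t)
    (a'.eval t) η0 η1 (K + 2) (hat t)
  have r2 := step23 b1 (B.map (evalRingHom t')) i0 i1 h01 s (a.eval t') (a'.eval t') K hK
    (by rw [e0]; exact hη0.symm) (by rw [e1]; exact hη1.symm) (hat t') (by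
      have hc := r1.cong
      refine ⟨fun i => ?_, ?_, fun i => ?_⟩
      · have := Ideal.sub_mem _ (hev' (B.p i)) (hc.1 i)
        simpa using this
      · have := Ideal.sub_mem _ (hev' B.c) hc.2.1
        simpa using this
      · have := Ideal.sub_mem _ (hev' (B.m i)) (hc.2.2 i)
        simpa using this)
    (by rw [r1.q_eq, map_q, hq, map_zero]) (by rw [map_q, hq, map_zero])
  have hcard : 2 ≤ Fintype.card ι := by
    have := Finset.card_le_univ ({i0, i1} : Finset ι)
    rwa [Finset.card_pair h01] at this
  exact (r1.ideal_mono le_top).trans' r2 (by omega)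

end Tri
end Part7

section Part8
open Polynomial

namespace Tri
variable {ι : Type*} [DecidableEq ι] [Fintype ι] {R : Type*} [CommRing R]

lemma avoid_mul (τ : R) (s : Set (Ideal R)) (hs : s.Finite) (hp : ∀ Q ∈ s, Q.IsPrime)
    (hτ : ∀ Q ∈ s, τ ∉ Q) (y z : Ideal R → R) :
    ∃ ξ, ∀ Q ∈ s, (y Q ∉ Q ∨ z Q ∉ Q) → y Q + τ * ξ * z Q ∉ Q := by
  obtain ⟨ξ, hξ⟩ := avoid_set {Q ∈ s | y Q ∉ Q ∨ z Q ∉ Q} (hs.subset (fun Q h => h.1))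
    (fun Q h => hp Q h.1) y (fun Q => τ * z Q) (fun Q h => by
      refine h.2.imp id (fun h2 h3 => ?_)
      exact ((hp Q h.1).mem_or_mem h3).elim (hτ Q h.1) h2)
  refine ⟨ξ, fun Q hQ h => ?_⟩
  have := hξ Q ⟨hQ, h⟩
  rwa [show y Q + τ * ξ * z Q = y Q + ξ * (τ * z Q) by ring]

lemma gp_rest (τ : R) (s : Set (Ideal R)) (hs : s.Finite) (hp : ∀ Q ∈ s, Q.IsPrime)
    (hτ : ∀ Q ∈ s, τ ∉ Q) (i0 i1 i2 : ι) (h01 : i0 ≠ i1) (h02 : i0 ≠ i2) (h12 : i1 ≠ i2)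
    (b : Tri ι R) (hb : ∀ Q ∈ s, ¬ ∀ i, i ≠ i0 → b.p i ∈ Q ∧ b.m i ∈ Q) :
    ∃ b', Reach (Ideal.span {τ}) (1 + 2 * (Fintype.card ι - 2)) b b' ∧ b'.p i0 = b.p i0 ∧
      ∀ Q ∈ s, b'.p i1 ∉ Q := by
  classical
  have hmem : ∀ ξ, τ * ξ ∈ Ideal.span {τ} := fun ξ =>
    Ideal.mul_mem_right _ _ (Ideal.mem_span_singleton_self τ)
  obtain ⟨ξ, hξ⟩ := avoid_mul τ s hs hp hτ (fun _ => b.p i2) (fun _ => b.m i1)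
  set b1 := b.up i2 i1 (τ * ξ) with hb1
  have r1 : Reach (Ideal.span {τ}) 1 b b1 := (Step.up b i2 i1 h12.symm _ (hmem ξ)).reach
  have e1 : ∀ Q ∈ s, ¬ ((∀ i, i ≠ i0 → b1.p i ∈ Q) ∧ ∀ i, i ≠ i0 → i ≠ i1 → b1.m i ∈ Q) := by
    rintro Q hQ ⟨hP, hM⟩
    have a2 : b.p i2 + τ * ξ * b.m i1 ∈ Q := by
      have := hP i2 h02.symm
      simpa [hb1, Tri.up, h12.symm] using this
    have a3 : b.p i2 ∈ Q ∧ b.m i1 ∈ Q := by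
      by_contra hc
      exact hξ Q hQ (by tauto) a2
    apply hb Q hQ
    intro i hi
    by_cases hi1 : i = i1
    · subst hi1
      refine ⟨?_, a3.2⟩
      have h1 := hP i hi
      have h2 : b.m i2 ∈ Q := by
        have := hM i2 h02.symm h12.symm
        simpa [hb1, Tri.up] using this
      have h3 : b.p i - τ * ξ * b.m i2 ∈ Q := by simpa [hb1, Tri.up] using h1
      have := Q.add_mem h3 (Q.mul_mem_left (τ * ξ) h2)
      simpa using this
    · refine ⟨?_, by simpa [hb1, Tri.up] using hM i hi hi1⟩
      by_cases hi2 : i = i2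
      · subst hi2; exact a3.1
      · simpa [hb1, Tri.up, hi1, hi2] using hP i hi
  set T : Finset ι := (Finset.univ.erase i0).erase i1 with hT
  have hTm : ∀ i, i ∈ T ↔ i ≠ i1 ∧ i ≠ i0 := by simp [hT]
  have hTc : T.card = Fintype.card ι - 2 := by
    rw [hT, Finset.card_erase_of_mem (by simp [h01.symm]), Finset.card_erase_of_mem (by simp),
      Finset.card_univ]; omega
  have hb1p : b1.p i0 = b.p i0 := by simp [hb1, Tri.up, h01, h02]
  obtain ⟨b', r2, e2, e3⟩ := Reach.iter (I := Ideal.span {τ}) 2 T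
    (fun U c => c.p i0 = b.p i0 ∧ ∀ Q ∈ s, c.p i1 ∉ Q ∨ ∃ i ∈ T, i ∉ U ∧ (c.p i ∉ Q ∨ c.m i ∉ Q))
    (by
      rintro U i c hiT hiU hUT ⟨hc0, hc⟩
      obtain ⟨hi1, hi0⟩ := (hTm i).1 hiT
      obtain ⟨ξ, hξ⟩ := avoid_mul τ s hs hp hτ
        (fun Q => if c.p i1 ∉ Q ∨ c.m i ∉ Q then c.p i1 else c.p i)
        (fun Q => if c.p i1 ∉ Q ∨ c.m i ∉ Q then c.m i else - c.m i1)
      set c1 := c.up i1 i (τ * ξ) with hc1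
      obtain ⟨ξ', hξ'⟩ := avoid_mul τ s hs hp hτ (fun Q => c1.p i1) (fun Q => c1.p i)
      have s1 : Step (Ideal.span {τ}) c c1 := Step.up c i1 i hi1.symm _ (hmem ξ)
      have s2 : Step (Ideal.span {τ}) c1 (c1.levi i1 i (τ * ξ')) :=
        Step.levi c1 i1 i hi1.symm _ (hmem ξ')
      refine ⟨_, s1.reach.trans s2.reach, ?_, fun Q hQ => ?_⟩
      · simp [Tri.levi, hc1, Tri.up, h01, hi0.symm, hc0]
      · have key : (c1.p i1 ∉ Q ∨ c1.p i ∉ Q) → (c1.levi i1 i (τ * ξ')).p i1 ∉ Q := by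
          intro h
          have := hξ' Q hQ h
          simpa [Tri.levi] using this
        have k1 := hξ Q hQ
        by_cases hA : c.p i1 ∉ Q ∨ c.m i ∉ Q
        · simp only [if_pos hA] at k1
          left; apply key; left
          simpa [hc1, Tri.up, hi1.symm] using k1 hA
        · simp only [if_neg hA] at k1
          by_cases hB : c.p i ∉ Q
          · left; apply key; right
            have := k1 (Or.inl hB)
            rw [mul_neg, ← sub_eq_add_neg] at this
            simpa [hc1, Tri.up] using this
          · right
            rcases hc Q hQ with h | ⟨j, hjT, hjU, hj⟩
            · exact absurd (Or.inl h) hA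
            · have hji : j ≠ i := by
                rintro rfl; tauto
              obtain ⟨hj1, hj0⟩ := (hTm j).1 hjT
              refine ⟨j, hjT, by simp [hji, hjU], ?_⟩
              simpa [Tri.levi, hc1, Tri.up, hji, hj1] using hj)
    b1 (by
      refine ⟨hb1p, fun Q hQ => ?_⟩
      by_contra hc
      push Not at hc
      apply e1 Q hQ
      refine ⟨fun i hi => ?_, fun i hi hi1 => (hc.2 i ((hTm i).2 ⟨hi1, hi⟩) (by simp)).2⟩
      by_cases hi1 : i = i1
      · subst hi1; exact hc.1
      · exact (hc.2 i ((hTm i).2 ⟨hi1, hi⟩) (by simp)).1)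
  refine ⟨b', r1.trans' r2 (by rw [hTc]), e2, fun Q hQ => ?_⟩
  rcases e3 Q hQ with h | ⟨i, hi, hi', _⟩
  · exact h
  · exact absurd hi hi'

end Tri
end Part8

section Part9
open Polynomial

section QS
variable {A : Type*} [CommRing A]

/-- primes over `f` that lie over the set `s`. -/
def QS (s : Set (Ideal A)) (f : A[X]) : Set (Ideal A[X]) :=
  {Q | Q.IsPrime ∧ f ∈ Q ∧ Q.comap (C : A →+* A[X]) ∈ s}

lemma QS_incomp {f : A[X]} (hf : f.Monic) {P Q : Ideal A[X]} (hP : P.IsPrime) (hfP : f ∈ P)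
    (hPQ : P ≤ Q) (h : Q.comap (C : A →+* A[X]) ≤ P.comap C) : Q ≤ P := by
  intro x hx
  by_contra hxP
  haveI := hf.finite_quotient
  obtain ⟨p, hp, hpx⟩ := Algebra.IsIntegral.isIntegral (R := A) (Ideal.Quotient.mk (Ideal.span {f}) x)
  have h1 : p.eval₂ (C : A →+* A[X]) x ∈ Ideal.span {f} := by
    rw [← Ideal.Quotient.eq_zero_iff_mem, Polynomial.hom_eval₂]
    exact hpx
  have h2 : p.eval₂ (C : A →+* A[X]) x ∈ P := (Ideal.span_singleton_le_iff_mem P).2 hfP h1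
  haveI : (P.comap (C : A →+* A[X])).IsPrime := Ideal.comap_isPrime _ _
  have := Ideal.comap_lt_comap_of_root_mem_sdiff (f := (C : A →+* A[X])) hPQ ⟨hx, hxP⟩
    (Polynomial.map_monic_ne_zero hp) h2
  exact absurd h this.not_ge

lemma QS_finite [IsNoetherianRing A] {s : Set (Ideal A)} (hs : s.Finite) {f : A[X]}
    (hf : f.Monic) : (QS s f).Finite := by
  refine (hs.biUnion (t := fun p => (p.map (C : A →+* A[X]) ⊔ Ideal.span {f}).minimalPrimes)
    (fun p _ => Ideal.finite_minimalPrimes_of_isNoetherianRing _ _)).subset ?_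
  rintro Q ⟨hQ, hfQ, hQs⟩
  refine Set.mem_biUnion hQs ⟨⟨hQ, sup_le Ideal.map_comap_le
    ((Ideal.span_singleton_le_iff_mem Q).2 hfQ)⟩, ?_⟩
  rintro P ⟨hP, hle⟩ hPQ
  refine QS_incomp hf hP ?_ hPQ ?_
  · exact hle (Ideal.mem_sup_right (Ideal.mem_span_singleton_self f))
  · exact Ideal.map_le_iff_le_comap.1 (le_sup_left.trans hle)

lemma QS_elim {s : Set (Ideal A)} (hs : s.Finite) (hp : ∀ P ∈ s, P.IsPrime)
    {f g : A[X]} (hf : f.Monic) (hg : ∀ Q ∈ QS s f, g ∉ Q) :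
    ∃ x : A, (∀ P ∈ s, x ∉ P) ∧ ∃ a a', a * f + a' * g = C x := by
  haveI := hf.finite_quotient
  have key : ∀ P ∈ s, ¬ (Ideal.span {f, g}).comap (C : A →+* A[X]) ≤ P := by
    intro P hP hle
    haveI := hp P hP
    have hker : Ideal.span {f} ≤ Ideal.span {f, g} := Ideal.span_mono (by simp)
    obtain ⟨Q, hQI, hQ, hQP⟩ := Ideal.exists_ideal_over_prime_of_isIntegral
      (S := A[X] ⧸ Ideal.span {f}) P ((Ideal.span {f, g}).map (Ideal.Quotient.mk (Ideal.span {f})))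
      (by
        intro x hx
        apply hle
        have hx' : Ideal.Quotient.mk (Ideal.span {f}) (C x) ∈
          (Ideal.span {f, g}).map (Ideal.Quotient.mk (Ideal.span {f})) := hx
        rw [← Ideal.mem_comap, Ideal.comap_map_of_surjective' _ Ideal.Quotient.mk_surjective,
          Ideal.mk_ker, sup_eq_left.2 hker] at hx'
        exact hx')
    refine hg (Q.comap (Ideal.Quotient.mk (Ideal.span {f}))) ⟨Ideal.comap_isPrime _ _, ?_, ?_⟩ ?_
    · exact hQI (Ideal.mem_map_of_mem _ (Ideal.subset_span (by simp)))
    · have : (Q.comap (Ideal.Quotient.mk (Ideal.span {f}))).comap (C : A →+* A[X]) = P := by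
        rw [← hQP]; rfl
      rw [this]; exact hP
    · exact hQI (Ideal.mem_map_of_mem _ (Ideal.subset_span (by simp)))
  have := (Ideal.subset_union_prime (f := id) (s := hs.toFinset) ⊥ ⊥ (fun P hP _ _ => hp P (by simpa using hP))
    (I := (Ideal.span {f, g}).comap (C : A →+* A[X]))).not.2 (by
      rintro ⟨P, hP, hle⟩
      exact key P (by simpa using hP) hle)
  rw [Set.not_subset] at this
  obtain ⟨x, hx, hxn⟩ := this
  refine ⟨x, fun P hP hxP => hxn ?_, ?_⟩
  · exact Set.mem_biUnion (by simpa using hP) hxP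
  · have hx' : C x ∈ Ideal.span {f, g} := hx
    rw [Ideal.mem_span_pair] at hx'
    exact hx'
end QS

namespace Tri
variable {ι : Type*} [DecidableEq ι] [Fintype ι] {A : Type*} [CommRing A]

lemma QS_one {s : Set (Ideal A)} {f : A[X]} (h1 : f.eval 1 = 1) : ∀ Q ∈ QS s f, (X - 1 : A[X]) ∉ Q := by
  rintro Q ⟨hQ, hf, -⟩ hX
  obtain ⟨g, hg⟩ : (X - C 1 : A[X]) ∣ f - C 1 := by
    rw [Polynomial.dvd_iff_isRoot]; simp [h1]
  apply hQ.ne_top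
  rw [Ideal.eq_top_iff_one]
  have := Q.sub_mem hf (Q.mul_mem_right g hX)
  convert this using 1
  simp only [map_one] at hg
  linear_combination -hg

lemma gp_start [IsNoetherianRing A] [Nontrivial A] {s : Set (Ideal A)} (hs : s.Finite)
    (i0 i1 : ι) (h01 : i0 ≠ i1) (B : Tri ι A[X]) (hB : B.Iso) (hm : (B.p i0).Monic)
    (he : (B.p i0).eval 1 = 1) :
    ∃ B', Reach (Ideal.span {X - 1}) 2 B B' ∧ (B'.p i0).Monic ∧
      ∀ Q ∈ QS s (B'.p i0), ¬ ∀ i, i ≠ i0 → B'.p i ∈ Q ∧ B'.m i ∈ Q := by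
  classical
  have hmem : ∀ ξ, (X - 1) * ξ ∈ Ideal.span {(X - 1 : A[X])} := fun ξ =>
    Ideal.mul_mem_right _ _ (Ideal.mem_span_singleton_self _)
  have hX1 : (X - 1 : A[X]).Monic := by simpa using Polynomial.monic_X_sub_C (1 : A)
  have hX1d : (X - 1 : A[X]).natDegree = 1 := by simpa using Polynomial.natDegree_X_sub_C (1 : A)
  -- general degree lemma
  have hdeg : ∀ (g h : A[X]), h.Monic → ∀ M, g.natDegree ≤ M →
      (g + (X - 1) * (X ^ M * h)).Monic := by
    intro g h hh M hM
    have hX : (X ^ M * h : A[X]).Monic := (monic_X_pow M).mul hh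
    refine (hX1.mul hX).add_of_right ?_
    apply Polynomial.degree_lt_degree
    rw [hX1.natDegree_mul hX, hX1d, (monic_X_pow M).natDegree_mul hh, natDegree_X_pow]
    omega
  set b1 := B.down i1 i0 ((X - 1) * X ^ (B.m i1).natDegree) with hb1
  have s1 : Step (Ideal.span {(X - 1 : A[X])}) B b1 := .down B i1 i0 h01.symm _ (hmem _)
  have hm1 : (b1.m i1).Monic := by
    have : b1.m i1 = B.m i1 + (X - 1) * (X ^ (B.m i1).natDegree * B.p i0) := by
      simp [hb1, Tri.down, h01.symm]; ring
    rw [this]; exact hdeg _ _ hm _ le_rfl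
  have hiso := s1.iso hB
  have hp0 : b1.p i0 = B.p i0 := rfl
  obtain ⟨ξ, hξ⟩ := avoid_mul (X - 1 : A[X]) (QS s (B.p i0)) (QS_finite hs hm) (fun Q h => h.1)
    (QS_one he) (fun _ => b1.p i1) (fun _ => b1.m i0)
  set G := b1.p i0 - (X - 1) * ξ * b1.m i1 with hG
  set η := (X - 1) * (ξ - b1.p i0 * X ^ G.natDegree) with hη
  have s2 : Step (Ideal.span {(X - 1 : A[X])}) b1 (b1.up i1 i0 η) := .up b1 i1 i0 h01.symm _ (hmem _)
  have e0 : (b1.up i1 i0 η).p i0 = b1.p i0 - η * b1.m i1 := by simp [Tri.up]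
  have e1 : (b1.up i1 i0 η).p i1 = b1.p i1 + η * b1.m i0 := by simp [Tri.up, h01.symm]
  refine ⟨_, s1.reach.trans s2.reach, ?_, ?_⟩
  · rw [e0]
    have : b1.p i0 - η * b1.m i1 = G + (X - 1) * (X ^ G.natDegree * (b1.p i0 * b1.m i1)) := by
      rw [hη, hG]; ring
    rw [this]
    exact hdeg _ _ (hm.mul hm1) _ le_rfl
  · rintro Q ⟨hQ, hQ0, hQs⟩ hall
    obtain ⟨h1, h2⟩ := hall i1 h01.symm
    have h2' : b1.m i1 ∈ Q := h2
    rw [e0] at hQ0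
    have h3 : b1.p i0 ∈ Q := by
      have := Q.add_mem hQ0 (Q.mul_mem_left η h2'); simpa using this
    rw [e1] at h1
    have h4 : b1.p i1 + (X - 1) * ξ * b1.m i0 ∈ Q := by
      have := Q.add_mem h1 (Q.mul_mem_left ((X - 1) * X ^ G.natDegree * b1.m i0) h3)
      convert this using 1
      rw [hη]; ring
    have h5 : b1.p i1 ∈ Q ∧ b1.m i0 ∈ Q := by
      by_contra hc
      exact hξ Q ⟨hQ, h3, hQs⟩ (by tauto) h4
    apply hiso.2 Q hQ
    refine ⟨fun i => ?_, fun i => ?_⟩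
    · by_cases hi0 : i = i0
      · rw [hi0]; exact h3
      · by_cases hi1 : i = i1
        · rw [hi1]; exact h5.1
        · have := (hall i hi0).1
          simpa [Tri.up, hi0, hi1] using this
    · by_cases hi0 : i = i0
      · rw [hi0]; exact h5.2
      · exact (hall i hi0).2

lemma cong_one {B B' : Tri ι A[X]} {N : ℕ} (h : Reach (Ideal.span {(X - 1 : A[X])}) N B B') :
    B'.map (evalRingHom 1) = B.map (evalRingHom 1) := by
  have key : ∀ f : A[X], f ∈ Ideal.span {(X - 1 : A[X])} → f.eval 1 = 0 := by
    intro f hf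
    rw [Ideal.mem_span_singleton] at hf
    obtain ⟨g, rfl⟩ := hf
    simp
  obtain ⟨h1, h2, h3⟩ := h.cong
  ext i
  · have := key _ (h1 i); simpa [sub_eq_zero] using this
  · have := key _ h2; simpa [sub_eq_zero] using this
  · have := key _ (h3 i); simpa [sub_eq_zero] using this

lemma gp_patch [IsNoetherianRing A] [Nontrivial A] {s : Set (Ideal A)} (hs : s.Finite)
    (hsp : ∀ P ∈ s, P.IsPrime)
    (i0 i1 i2 : ι) (h01 : i0 ≠ i1) (h02 : i0 ≠ i2) (h12 : i1 ≠ i2)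
    (B : Tri ι A[X]) (hB : B.Iso) (hm : (B.p i0).Monic)
    (he : (B.p i0).eval 1 = 1) :
    ∃ B', Reach (Ideal.span {X - 1}) (2 * Fintype.card ι - 1) B B' ∧ (B'.p i0).Monic ∧
      ∃ x : A, (∀ P ∈ s, x ∉ P) ∧ ∃ a a', a * B'.p i0 + a' * B'.p i1 = C x := by
  obtain ⟨B1, r1, m1, g1⟩ := gp_start hs i0 i1 h01 B hB hm he
  have he1 : (B1.p i0).eval 1 = 1 := by
    have := congrArg (fun b => b.p i0) (cong_one r1)
    simpa [he] using this
  obtain ⟨B2, r2, e2, g2⟩ := gp_rest (X - 1 : A[X]) (QS s (B1.p i0)) (QS_finite hs m1)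
    (fun Q h => h.1) (QS_one he1) i0 i1 i2 h01 h02 h12 B1 g1
  have hcard : 2 ≤ Fintype.card ι := by
    have := Finset.card_le_univ ({i0, i1} : Finset ι)
    rwa [Finset.card_pair h01] at this
  refine ⟨B2, r1.trans' r2 (by omega), by rwa [e2], ?_⟩
  rw [← e2] at g2
  exact QS_elim hs hsp (by rwa [e2]) g2

end Tri
end Part9

section Part10
open Polynomial

lemma RH_top_of_dim {A : Type*} [CommRing A] (d : ℕ) (hd : ringKrullDim A ≤ (d : WithBot ℕ∞)) (K I : Ideal A) (m : ℕ) (hm : d < m)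
    (h : ∀ P : Ideal A, P.IsPrime → I ≤ P → RH K m P) : I = ⊤ := by
  by_contra hne
  obtain ⟨P, hP, hIP⟩ := Ideal.exists_le_maximal I hne
  have h1 := (h P hP.isPrime hIP).height
  have h2 := Ideal.height_le_ringKrullDim_of_ne_top hP.ne_top
  have h3 : ((m : ℕ∞) : WithBot ℕ∞) ≤ (P.height : WithBot ℕ∞) := by exact_mod_cast h1
  have h4 := h3.trans (h2.trans hd)
  have h5 : m ≤ d := by exact_mod_cast h4
  omega

namespace Tri
variable {ι : Type*} [DecidableEq ι] [Fintype ι] {A : Type*} [CommRing A]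

lemma chain [IsNoetherianRing A] [Nontrivial A] (i0 i1 i2 : ι) (h01 : i0 ≠ i1) (h02 : i0 ≠ i2)
    (h12 : i1 ≠ i2) (B : Tri ι A[X]) (hB : B.Iso) (hm : (B.p i0).Monic)
    (he : (B.p i0).eval 1 = 1) (j : ℕ) :
    ∃ (I : Ideal A) (B' : Tri ι A[X]), (∀ t, ∀ z ∈ I, Reach ⊤ (j * (6 * Fintype.card ι + 8))
        (B.map (evalRingHom t)) (B'.map (evalRingHom (t + z)))) ∧
      (∀ P : Ideal A, P.IsPrime → I ≤ P → RH ⊥ j P) ∧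
      B'.map (evalRingHom 1) = B.map (evalRingHom 1) ∧ B'.Iso ∧ (B'.p i0).Monic := by
  induction j with
  | zero =>
    refine ⟨⊥, B, fun t z hz => ?_, fun P hP _ => ⟨hP, bot_le⟩, rfl, hB, hm⟩
    rw [Ideal.mem_bot] at hz; subst hz; rw [add_zero]; exact .refl _ _
  | succ j ih =>
    obtain ⟨I, B1, r1, hI, h1, hB1, hm1⟩ := ih
    have he1 : (B1.p i0).eval 1 = 1 := by
      have := congrArg (fun b => b.p i0) h1
      simpa [he] using this
    obtain ⟨B2, r2, hm2, x, hx, a, a', ha⟩ := gp_patch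
      (Ideal.finite_minimalPrimes_of_isNoetherianRing A I) (fun P hP => hP.1.1) i0 i1 i2 h01 h02 h12
      B1 hB1 hm1 he1
    have hB2 := r2.iso hB1
    obtain ⟨k, hk⟩ := patch B2 i0 i1 i2 h01 h02 h12 x a a' hB2.1 ha
    refine ⟨I ⊔ Ideal.span {x ^ k}, B2, ?_, ?_, (cong_one r2).trans h1, hB2, hm2⟩
    · intro t z hz
      obtain ⟨z1, hz1, z2, hz2, rfl⟩ := Submodule.mem_sup.1 hz
      obtain ⟨y, rfl⟩ := Ideal.mem_span_singleton.1 hz2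
      have q1 := r1 t z1 hz1
      have q2 := r2.map_top (evalRingHom (t + z1))
      have q3 := hk (t + z1) y
      rw [← add_assoc]
      refine (q1.trans q2).trans' q3 ?_
      have : 1 ≤ Fintype.card ι := Fintype.card_pos_iff.2 ⟨i0⟩
      have : (j + 1) * (6 * Fintype.card ι + 8) = j * (6 * Fintype.card ι + 8) + (6 * Fintype.card ι + 8) := by ring
      omega
    · intro P hP hle
      obtain ⟨Q, hQ, hQP⟩ := Ideal.exists_minimalPrimes_le (le_sup_left.trans hle)
      refine ⟨hP, Q, hI Q hQ.1.1 hQ.1.2, lt_of_le_of_ne hQP ?_⟩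
      rintro rfl
      exact hx Q hQ (hP.mem_of_pow_mem k (hle (Ideal.mem_sup_right (Ideal.mem_span_singleton_self _))))

lemma path [IsNoetherianRing A] [Nontrivial A] (d : ℕ) (hd : ringKrullDim A ≤ (d : WithBot ℕ∞))
    (i0 i1 i2 : ι) (h01 : i0 ≠ i1) (h02 : i0 ≠ i2)
    (h12 : i1 ≠ i2) (B : Tri ι A[X]) (hB : B.Iso) (hm : (B.p i0).Monic)
    (he : (B.p i0).eval 1 = 1) :
    Reach ⊤ ((d + 1) * (6 * Fintype.card ι + 8)) (B.map (evalRingHom 0)) (B.map (evalRingHom 1)) := by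
  obtain ⟨I, B', r, hI, h1, -, -⟩ := chain i0 i1 i2 h01 h02 h12 B hB hm he (d + 1)
  have := RH_top_of_dim d hd ⊥ I (d + 1) (by omega) hI
  have := r 0 1 (this ▸ Submodule.mem_top)
  rwa [zero_add, h1] at this

end Tri
end Part10

section Part11
open Polynomial

namespace Tri
variable {ι : Type*} [DecidableEq ι] [Fintype ι] {C₀ : Type*} [CommRing C₀] [IsNoetherianRing C₀]

lemma reduce_zero {R : Type*} [CommRing R] [IsNoetherianRing R] (D : ℕ)
    (hdim : ringKrullDim R ≤ (D : WithBot ℕ∞)) (i0 : ι) (hr : D + 2 ≤ Fintype.card ι)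
    (b : Tri ι R) (hb : b.Iso) :
    Reach ⊤ (Fintype.card ι * (Fintype.card ι - 1) / 2 + 4 * Fintype.card ι) b (std i0) := by
  obtain ⟨b1, r1, h1⟩ := gp2 (Set.finite_singleton (⊥ : Ideal R)) i0 b hb
  have htop : Ideal.span (b1.p '' (Finset.univ.erase i0 : Finset ι)) = ⊤ := by
    refine RH_top_of_dim D hdim ⊥ _ (Fintype.card ι - 1) (by omega) (fun P hP hle => ?_)
    exact h1 ⊥ rfl P hP bot_le (fun i hi => hle (Ideal.subset_span ⟨i, by simp [hi], rfl⟩))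
  have hmem : 1 - b1.p i0 ∈ Ideal.span (b1.p '' (Finset.univ.erase i0 : Finset ι)) :=
    htop ▸ Submodule.mem_top
  obtain ⟨a, ha⟩ := (Submodule.mem_span_image_finset_iff_exists_fun' _).1 hmem
  obtain ⟨b2, r2, h2, -⟩ := setp i0 b1 a
  have h20 : b2.p i0 = 1 := by
    rw [h2]; simp only [smul_eq_mul] at ha; rw [ha]; ring
  have hb2 := r2.iso (r1.iso hb)
  exact (r1.trans r2).trans' (clear i0 b2 hb2.1 h20) (by omega)

lemma reduce_succ [Nontrivial C₀] (D n : ℕ)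
    (hdim : ringKrullDim C₀ = (D : WithBot ℕ∞)) (i0 i1 i2 : ι) (h01 : i0 ≠ i1) (h02 : i0 ≠ i2)
    (h12 : i1 ≠ i2) (hr : D + 2 ≤ Fintype.card ι)
    (b : Tri ι (MvPolynomial (Fin (n + 1)) C₀)) (hb : b.Iso) :
    Reach ⊤ (Fintype.card ι * (Fintype.card ι - 1) / 2 + 4 * Fintype.card ι +
      (D + n + 2) * (6 * Fintype.card ι + 8)) b (std i0) := by
  classical
  let ev : MvPolynomial (Fin (n + 1)) C₀ →+* C₀ := MvPolynomial.constantCoeff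
  have hev : Function.Surjective ev := fun c => ⟨MvPolynomial.C c, MvPolynomial.constantCoeff_C _ c⟩
  have hdimA : ringKrullDim (MvPolynomial (Fin (n + 1)) C₀) ≤ ((D + n + 1 : ℕ) : WithBot ℕ∞) := by
    rw [MvPolynomial.ringKrullDim_of_isNoetherianRing, hdim]
    simp [add_assoc]
  obtain ⟨b1, r1, h1⟩ := gp2 (F := {⊥, RingHom.ker ev}) (by simp) i0 b hb
  set I := Ideal.span (b1.p '' (Finset.univ.erase i0 : Finset ι)) with hI
  have hpI : ∀ i, i ≠ i0 → b1.p i ∈ I := fun i hi => Ideal.subset_span ⟨i, by simp [hi], rfl⟩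
  -- the constant terms
  have htop : Ideal.span ((fun i => ev (b1.p i)) '' (Finset.univ.erase i0 : Finset ι)) = ⊤ := by
    refine RH_top_of_dim D hdim.le ⊥ _ (Fintype.card ι - 1) (by omega) (fun P hP hle => ?_)
    have := h1 (RingHom.ker ev) (by simp) (P.comap ev) (Ideal.comap_isPrime _ _)
      (Ideal.comap_mono (f := ev) bot_le)
      (fun i hi => hle (Ideal.subset_span ⟨i, by simp [hi], rfl⟩))
    have := this.map_of_surj ev hev
    rwa [Ideal.map_comap_of_surjective ev hev] at this
  have hmem : 1 - ev (b1.p i0) ∈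
      Ideal.span ((fun i => ev (b1.p i)) '' (Finset.univ.erase i0 : Finset ι)) :=
    htop ▸ Submodule.mem_top
  obtain ⟨a, ha⟩ := (Submodule.mem_span_image_finset_iff_exists_fun' _).1 hmem
  simp only [smul_eq_mul] at ha
  -- the monic element
  obtain ⟨f, hfI, w, hw, hf⟩ := lead (S := MvPolynomial (Fin (n + 1)) C₀) (D + 1)
    (by rw [hdim]; exact_mod_cast Nat.lt_succ_self D) (n + 1) I
    (fun P hP hle => by
      have := (h1 ⊥ (by simp) P hP bot_le (fun i hi => hle (hpI i hi))).height
      refine le_trans ?_ this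
      exact_mod_cast (by omega : D + 1 ≤ Fintype.card ι - 1))
  obtain ⟨α, hα⟩ := (Submodule.mem_span_image_finset_iff_exists_fun' _).1 hfI
  simp only [smul_eq_mul] at hα
  set g := b1.p i0 + ∑ i ∈ Finset.univ.erase i0, MvPolynomial.C (a i) * b1.p i with hg
  obtain ⟨M, hM⟩ := deg_bound (S := MvPolynomial (Fin (n + 1)) C₀) w g
  obtain ⟨b2, r2, h2, -⟩ := setp i0 b1
    (fun i => MvPolynomial.C (a i) + MvPolynomial.X 0 ^ (M + 1) * α i)
  have hp0 : b2.p i0 = g + MvPolynomial.X 0 ^ (M + 1) * f := by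
    rw [h2, hg, ← hα, Finset.mul_sum, add_assoc, ← Finset.sum_add_distrib]
    congr 1
    exact Finset.sum_congr rfl fun i _ => by ring
  have hev0 : ev (b2.p i0) = 1 := by
    rw [hp0, map_add, map_mul, map_pow]
    have hX : ev (MvPolynomial.X 0) = 0 := MvPolynomial.constantCoeff_X _ _
    rw [hX, hg, map_add, map_sum]
    have : ∑ i ∈ Finset.univ.erase i0, ev (MvPolynomial.C (a i) * b1.p i) = 1 - ev (b1.p i0) := by
      rw [← ha]
      refine Finset.sum_congr rfl fun i _ => ?_
      rw [map_mul]; congr 1; exact MvPolynomial.constantCoeff_C _ _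
    rw [this]; simp
  have hb2 := r2.iso (r1.iso hb)
  -- the path
  let u : Fin (n + 1) → (MvPolynomial (Fin (n + 1)) C₀)[X] := fun i =>
    C (MvPolynomial.X i) * (1 - X) + X ^ (w i - 1) * (X - 1)
  have hX1 : (X - 1 : (MvPolynomial (Fin (n + 1)) C₀)[X]).Monic := by
    simpa using Polynomial.monic_X_sub_C (1 : MvPolynomial (Fin (n + 1)) C₀)
  have hX1d : (X - 1 : (MvPolynomial (Fin (n + 1)) C₀)[X]).natDegree = 1 := by
    simpa using Polynomial.natDegree_X_sub_C (1 : MvPolynomial (Fin (n + 1)) C₀)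
  have hu : ∀ i, (u i).Monic ∧ (u i).natDegree = w i := by
    intro i
    have hwi := hw i
    have hm : (X ^ (w i - 1) * (X - 1) : (MvPolynomial (Fin (n + 1)) C₀)[X]).Monic :=
      (monic_X_pow _).mul hX1
    have hd : (X ^ (w i - 1) * (X - 1) : (MvPolynomial (Fin (n + 1)) C₀)[X]).natDegree = w i := by
      rw [(monic_X_pow _).natDegree_mul hX1, natDegree_X_pow, hX1d]; omega
    have hl : (C (MvPolynomial.X i) * (1 - X) : (MvPolynomial (Fin (n + 1)) C₀)[X]).natDegree ≤ 1 := by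
      refine (natDegree_C_mul_le _ _).trans ?_
      rw [← neg_sub, natDegree_neg, hX1d]
    refine ⟨hm.add_of_right (Polynomial.degree_lt_degree (by omega)), ?_⟩
    exact (natDegree_add_eq_right_of_natDegree_lt (by omega)).trans hd
  let φ : MvPolynomial (Fin (n + 1)) C₀ →+* (MvPolynomial (Fin (n + 1)) C₀)[X] :=
    (MvPolynomial.aeval u : MvPolynomial (Fin (n + 1)) C₀ →ₐ[C₀] _).toRingHom
  have hφ0 : (evalRingHom 0).comp φ = RingHom.id _ := by
    apply MvPolynomial.ringHom_ext
    · intro c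
      simp [φ, IsScalarTower.algebraMap_apply C₀ (MvPolynomial (Fin (n + 1)) C₀)
        (MvPolynomial (Fin (n + 1)) C₀)[X], MvPolynomial.algebraMap_eq]
    · intro i
      have hwi := hw i
      have : w i - 1 ≠ 0 := by omega
      simp [φ, u, this]
  have hφ1 : (evalRingHom 1).comp φ = MvPolynomial.C.comp ev := by
    apply MvPolynomial.ringHom_ext
    · intro c
      simp [φ, ev, IsScalarTower.algebraMap_apply C₀ (MvPolynomial (Fin (n + 1)) C₀)
        (MvPolynomial (Fin (n + 1)) C₀)[X], MvPolynomial.algebraMap_eq]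
    · intro i
      simp [φ, u, ev]
  have hBm : ((b2.map φ).p i0).Monic := by
    have hX : φ (MvPolynomial.X 0) = u 0 := by simp [φ]
    have hmon : (u 0 ^ (M + 1) * φ f).Monic := ((hu 0).1.pow _).mul (hf u hu)
    rw [map_p, hp0, map_add, map_mul, map_pow, hX]
    refine hmon.add_of_right (Polynomial.degree_lt_degree ?_)
    have h5 : (φ g).natDegree ≤ M := hM u (fun i => (hu i).2.le)
    have hφf : (φ f).Monic := hf u hu
    rw [((hu 0).1.pow _).natDegree_mul hφf, (hu 0).1.natDegree_pow, (hu 0).2]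
    have := hw 0
    nlinarith
  have hB1 : ((b2.map φ).p i0).eval 1 = 1 := by
    have := congrArg (fun h => h (b2.p i0)) hφ1
    simp only [RingHom.comp_apply, hev0, map_one] at this
    exact this
  have hend0 : (b2.map φ).map (evalRingHom 0) = b2 := by
    have h : ∀ x, evalRingHom 0 (φ x) = x := fun x => congrArg (fun h => h x) hφ0
    ext i
    · exact congrArg _ (h _)
    · exact congrArg _ (h _)
    · exact congrArg _ (h _)
  have r3 := path (D + n + 1) hdimA i0 i1 i2 h01 h02 h12 (b2.map φ) (hb2.map φ) hBm hB1
  have hb3 := r3.iso (by rw [hend0]; exact hb2)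
  rw [hend0] at r3
  have r4 := clear i0 _ hb3.1 hB1
  exact (r1.trans r2).trans' (r3.trans r4) (by
    have : (D + n + 1 + 1) = D + n + 2 := by ring
    rw [this]; omega)

lemma vec_std {r : ℕ} {R : Type*} [CommRing R] (hr : 0 < r) :
    (std (⟨0, hr⟩ : Fin r) : Tri (Fin r) R).vec = fun i => if i.val = 0 then 1 else 0 := by
  funext i
  unfold vec std
  by_cases h : i.val < r
  · by_cases h0 : i.val = 0 <;> simp [h, h0, Fin.ext_iff]
    intro hc; omega
  · have h0 : i.val ≠ 0 := by omega
    have h0' : i ≠ 0 := fun hc => h0 (by rw [hc]; rfl)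
    simp [h, h0, h0']
end Tri

lemma count_bound (n D r : ℕ) (h3 : 3 ≤ r) (hD : D + 2 ≤ r) (K : ℕ) (hK : K = 0 ∧ n = 0 ∨ 0 < n ∧ K = (D + n + 1) * (6 * r + 8)) :
    r * (r - 1) / 2 + 4 * r + K ≤ n * (12 * r - 8) +
          (n * D + r * (r - 1) / 2) * (r * (r - 1) / 2 + (r - 1 + 1) / 2 + 9 * r - 2) +
            9 * r - 8 := by
  set T := r * (r - 1) / 2 with hT
  have hTr : r ≤ T := by
    rw [hT, Nat.le_div_iff_mul_le (by norm_num)]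
    exact Nat.mul_le_mul_left r (by omega)
  set W := T + (r - 1 + 1) / 2 + 9 * r - 2 with hW
  have hW1 : 10 * r - 2 ≤ W := by omega
  obtain ⟨V, hV⟩ : ∃ V, V = 12 * r - 8 := ⟨_, rfl⟩
  rw [← hV]
  have hV1 : 6 * r + 8 ≤ V + 2 := by omega
  have hV2 : 6 * r + 8 ≤ V := by omega
  have a1 : n * (6 * r + 8) ≤ n * V := Nat.mul_le_mul_left n hV2
  have a2 : r * W ≤ T * W := Nat.mul_le_mul_right W hTr
  have a3 : T * W ≤ (n * D + T) * W := Nat.mul_le_mul_right W (Nat.le_add_left _ _)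
  have a4 : (D + 1) * (6 * r + 8) ≤ (T - 1) * W := Nat.mul_le_mul (by omega) (by omega)
  have a5 : T * W = (T - 1) * W + W := by
    obtain ⟨T', hT'⟩ : ∃ T', T = T' + 1 := ⟨T - 1, by omega⟩
    rw [hT']; simp; ring
  have a6 : (D + n + 1) * (6 * r + 8) = n * (6 * r + 8) + (D + 1) * (6 * r + 8) := by ring
  rcases hK with ⟨rfl, rfl⟩ | ⟨_, rfl⟩ <;> omega
end Part11

/-- Bounded reduction of isotropic unimodular columns (odd case): for any
`b ∈ IUm_{2r+1}(C[x_1,…,x_n])`, the first standard basis column `e_1` lies in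
`EO(2r+1,A)^{≤N} · b` with
`N = n(12r−8) + (nD + r(r−1)/2)(r(r−1)/2 + ⌈(r−1)/2⌉ + 9r−2) + 9r−8`. -/
theorem odd_column_bounded_reduction
    (C : Type*) [CommRing C] [IsNoetherianRing C] (n D : ℕ)
    (hdim : ringKrullDim C = (D : WithBot ℕ∞))
    (r : ℕ) (hr : max 3 (D + 2) ≤ r)
    (b : Fin (2 * r + 1) → MvPolynomial (Fin n) C)
    (hb : b ∈ IUmO r (MvPolynomial (Fin n) C)) :
    ∃ E ∈ EOO r
        (n * (12 * r - 8) +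
          (n * D + r * (r - 1) / 2) * (r * (r - 1) / 2 + (r - 1 + 1) / 2 + 9 * r - 2) +
            9 * r - 8)
        (MvPolynomial (Fin n) C),
      E.mulVec b = fun i : Fin (2 * r + 1) => if i.val = 0 then 1 else 0 := by
  have h3 : 3 ≤ r := le_trans (le_max_left _ _) hr
  have hD : D + 2 ≤ r := le_trans (le_max_right _ _) hr
  haveI : Nontrivial C := by
    by_contra hc
    rw [not_nontrivial_iff_subsingleton] at hc
    rw [ringKrullDim_eq_bot_of_subsingleton] at hdim
    exact absurd hdim (by simp [eq_comm])
  have hiso := Tri.iso_ofVec hb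
  have key : ∃ K, (K = 0 ∧ n = 0 ∨ 0 < n ∧ K = (D + n + 1) * (6 * r + 8)) ∧
      Tri.Reach ⊤ (r * (r - 1) / 2 + 4 * r + K) (Tri.ofVec b)
        (Tri.std (⟨0, by omega⟩ : Fin r)) := by
    cases n with
    | zero =>
      refine ⟨0, Or.inl ⟨rfl, rfl⟩, ?_⟩
      have := Tri.reduce_zero D (by rw [MvPolynomial.ringKrullDim_of_isNoetherianRing, hdim]; simp)
        (⟨0, by omega⟩ : Fin r) (by simpa using hD) _ hiso
      simpa using this
    | succ n =>
      refine ⟨_, Or.inr ⟨by omega, rfl⟩, ?_⟩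
      have := Tri.reduce_succ D n hdim (⟨0, by omega⟩ : Fin r) ⟨1, by omega⟩ ⟨2, by omega⟩
        (by simp) (by simp) (by simp) (by simpa using hD) _ hiso
      rw [Fintype.card_fin] at this
      exact this
  obtain ⟨K, hK, hreach⟩ := key
  obtain ⟨E, hE, hEb⟩ := (hreach.mono (count_bound n D r h3 hD K hK)).realize
  refine ⟨E, hE, ?_⟩
  rw [Tri.vec_ofVec, Tri.vec_std] at hEb
  exact hEb
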